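/- arXiv:2303.10737 — 3 statements merged into one kernel-verified Lean document; each statement's English description precedes it below -/
import Mathlib

section
/- For every n ≥ 1, the fundamental group of the annular configuration space M_n(S^1) is isomorphic to the direct product ℤ × Π_n, i.e. π_1(M_n(S^1), q₀) ≅ ℤ × Π_n. -/
/-!
`splitMap n` is a homeomorphism `M_{n+1}(S¹) ≃ₜ S¹ × Q_{n+1}`: rotating a configuration so that
its last point becomes `1` is undone by rotating back by the recorded position of that point,
and rotations preserve coincidences of points. It carries `q₀` to `(1, q₀)`, so the claim follows
from invariance of `π₁` under homeomorphisms (`fundamentalGroupEquivOfHomeomorph`), its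
compatibility with products (`fundamentalGroupProdEquiv`), and `π₁(S¹, 1) ≅ ℤ`
(`fundamentalGroupCircleEquiv`), which is read off from the universal covering
`Circle.exp : ℝ → S¹` with deck group `2πℤ`.
-/

open scoped Real

noncomputable section

/-- The configuration space `Q_{n+1}` of `n+1` ordered points on the circle,
no three of which coincide, with the last point fixed at `1`. -/
def QSet (n : ℕ) : Set (Fin (n + 1) → Circle) :=
  {z | z (Fin.last n) = 1 ∧
    ∀ i j k : Fin (n + 1), i ≠ j → i ≠ k → j ≠ k → ¬(z i = z j ∧ z i = z k)}

/-- The basepoint of `Q_{n+1}`: the `j`-th coordinate is `exp (2 π i j / (n+1))` (`1`-based). -/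
def q0 (n : ℕ) : Fin (n + 1) → Circle :=
  fun j => Circle.exp (2 * π * (j.val + 1) / (n + 1))

theorem q0_injective (n : ℕ) : Function.Injective (q0 n) := by
  intro i j h
  simp only [q0] at h; rw [Circle.exp_eq_exp] at h
  obtain ⟨m, hm⟩ := h
  have hn : (0:ℝ) < (n:ℝ) + 1 := by positivity
  have hpi : (0:ℝ) < π := Real.pi_pos
  have h2 : ((i.val : ℝ) + 1) = ((j.val : ℝ) + 1) + m * ((n:ℝ) + 1) := by
    field_simp at hm
    nlinarith [hm]
  have h3 : ((i.val : ℤ) + 1) = ((j.val : ℤ) + 1) + m * ((n:ℤ) + 1) := by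
    exact_mod_cast h2
  have hi := i.isLt
  have hj := j.isLt
  have hb : m * ((n:ℤ) + 1) = (i.val : ℤ) - (j.val : ℤ) := by linarith [h3]
  have hi' : (i.val : ℤ) ≤ n := by exact_mod_cast Nat.lt_succ_iff.mp hi
  have hj' : (j.val : ℤ) ≤ n := by exact_mod_cast Nat.lt_succ_iff.mp hj
  have hi0 : (0:ℤ) ≤ i.val := Int.natCast_nonneg _
  have hj0 : (0:ℤ) ≤ j.val := Int.natCast_nonneg _
  have hm0 : m = 0 := by
    rcases lt_trichotomy m 0 with hm' | hm' | hm'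
    · have h1 : m ≤ -1 := by omega
      nlinarith
    · exact hm'
    · have h1 : 1 ≤ m := hm'
      nlinarith
  subst hm0
  simp only [zero_mul] at hb
  have : (i.val : ℤ) = j.val := by omega
  exact Fin.ext (by exact_mod_cast this)

theorem q0_mem (n : ℕ) : q0 n ∈ QSet n := by
  constructor
  · show Circle.exp _ = 1
    have : 2 * π * ((Fin.last n).val + 1) / (n + 1) = 2 * π := by
      simp [Fin.last]
      field_simp
    rw [this, Circle.exp_two_pi]
  · intro i j k hij _ _ h
    exact hij (q0_injective n h.1)

/-- The basepoint as an element of `Q_{n+1}`. -/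
def Qbase (n : ℕ) : QSet n := ⟨q0 n, q0_mem n⟩

/-- The annular configuration space `M_{n+1}(S¹)` of `n+1` ordered points on the circle,
no three of which coincide. -/
def MSet (n : ℕ) : Set (Fin (n + 1) → Circle) :=
  {z | ∀ i j k : Fin (n + 1), i ≠ j → i ≠ k → j ≠ k → ¬(z i = z j ∧ z i = z k)}

theorem QSet_subset_MSet (n : ℕ) : QSet n ⊆ MSet n := fun _ hz => hz.2

/-- The map `M_{n+1}(S¹) → S¹ × Q_{n+1}` sending `(z₁, …, z_{n+1})` to
`(z_{n+1}, (z₁ · z_{n+1}⁻¹, …, zₙ · z_{n+1}⁻¹, 1))`. -/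
def splitMap (n : ℕ) : ↥(MSet n) → Circle × ↥(QSet n) :=
  fun z =>
    (z.1 (Fin.last n),
      ⟨fun j => z.1 j * (z.1 (Fin.last n))⁻¹,
        ⟨mul_inv_cancel _,
          fun i j k hij hik hjk h =>
            z.2 i j k hij hik hjk ⟨mul_right_cancel h.1, mul_right_cancel h.2⟩⟩⟩)

/-- `splitMap` as a homeomorphism `M_{n+1}(S¹) ≃ₜ S¹ × Q_{n+1}`; its inverse rotates a
configuration: `(w, (z₁, …, z_{n+1})) ↦ (z₁ · w, …, z_{n+1} · w)`. -/
def splitHomeomorph (n : ℕ) : ↥(MSet n) ≃ₜ Circle × ↥(QSet n) where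
  toFun := splitMap n
  invFun p := ⟨fun j => p.2.1 j * p.1, fun i j k hij hik hjk h =>
    p.2.2.2 i j k hij hik hjk ⟨mul_right_cancel h.1, mul_right_cancel h.2⟩⟩
  left_inv z := Subtype.ext <| funext fun j => by simp [splitMap]
  right_inv p := by
    obtain ⟨w, q, hq⟩ := p
    refine Prod.ext ?_ (Subtype.ext <| funext fun j => ?_)
    · simp [splitMap, hq.1]
    · simp [splitMap, hq.1]
  continuous_toFun := by
    have hc : ∀ j, Continuous fun z : ↥(MSet n) => z.1 j := fun j =>
      (continuous_apply j).comp continuous_subtype_val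
    exact (hc _).prodMk <| Continuous.subtype_mk
      (continuous_pi fun j => (hc j).mul (hc _).inv) _
  continuous_invFun := Continuous.subtype_mk (continuous_pi fun j =>
    ((continuous_apply j).comp (continuous_subtype_val.comp continuous_snd)).mul continuous_fst) _

theorem mapOfEq_mapOfEq_of_leftInverse {X Y : Type*} [TopologicalSpace X] [TopologicalSpace Y]
    {x : X} {y : Y} (f : C(X, Y)) (g : C(Y, X)) (hf : f x = y) (hg : g y = x)
    (hgf : Function.LeftInverse g f) (p : FundamentalGroup X x) :
    FundamentalGroup.mapOfEq g hg (FundamentalGroup.mapOfEq f hf p) = p := by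
  rw [FundamentalGroup.mapOfEq_apply, FundamentalGroup.mapOfEq_apply]
  induction p using Path.Homotopic.Quotient.ind with | mk γ =>
  rw [← Path.Homotopic.Quotient.mk_map, ← Path.Homotopic.Quotient.mk_cast,
    ← Path.Homotopic.Quotient.mk_map, ← Path.Homotopic.Quotient.mk_cast]
  congr 1
  ext t
  exact hgf _

/-- A homeomorphism induces an isomorphism of fundamental groups. -/
def fundamentalGroupEquivOfHomeomorph {X Y : Type*} [TopologicalSpace X] [TopologicalSpace Y]
    {x : X} {y : Y} (e : X ≃ₜ Y) (h : e x = y) :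
    FundamentalGroup X x ≃* FundamentalGroup Y y where
  __ := FundamentalGroup.mapOfEq (e : C(X, Y)) h
  invFun := FundamentalGroup.mapOfEq (e.symm : C(Y, X)) (by simp [← h])
  left_inv := mapOfEq_mapOfEq_of_leftInverse _ _ _ _ e.left_inv
  right_inv := mapOfEq_mapOfEq_of_leftInverse _ _ _ _ e.right_inv

/-- The fundamental group of a product is the product of the fundamental groups. -/
def fundamentalGroupProdEquiv {X Y : Type*} [TopologicalSpace X] [TopologicalSpace Y]
    (x : X) (y : Y) :
    FundamentalGroup (X × Y) (x, y) ≃* FundamentalGroup X x × FundamentalGroup Y y where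
  toFun p := (Path.Homotopic.projLeft p, Path.Homotopic.projRight p)
  invFun p := Path.Homotopic.prod p.1 p.2
  left_inv p := Path.Homotopic.prod_projLeft_projRight p
  right_inv _ := Prod.ext (Path.Homotopic.projLeft_prod _ _) (Path.Homotopic.projRight_prod _ _)
  map_mul' p q := Prod.ext (map_mul (FundamentalGroup.map ⟨_, continuous_fst⟩ (x, y)) p q)
    (map_mul (FundamentalGroup.map ⟨_, continuous_snd⟩ (x, y)) p q)

/-- `π₁(S¹, 1) ≅ ℤ`, through the deck group `2πℤ` of the universal covering `Circle.exp`. The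
opposite group, which appears because monodromy commutes with deck transformations, is removed by
commutativity. -/
def fundamentalGroupCircleEquiv : FundamentalGroup Circle 1 ≃* Multiplicative ℤ :=
  (Circle.isAddQuotientCoveringMap_exp.fundamentalGroupEquiv ⟨0, by simp⟩).trans <|
    (MulOpposite.opMulEquiv).symm.trans <|
      AddEquiv.toMultiplicative
        (AddEquiv.ofBijective ((zmultiplesHom ℝ (2 * π)).rangeRestrict)
          ⟨(AddMonoidHom.rangeRestrict_injective_iff).2 (by
            intro a b h
            simpa [Real.pi_ne_zero] using h),
           AddMonoidHom.rangeRestrict_surjective _⟩ : ℤ ≃+ AddSubgroup.zmultiples (2 * π)).symm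

/-- For every `n ≥ 1` (here `Mₙ(S¹) = MSet (n-1)` and `Qₙ = QSet (n-1)`),
the fundamental group of the annular configuration space `Mₙ(S¹)` is isomorphic to the
direct product `ℤ × Πₙ`, where `Πₙ = π₁(Qₙ, q₀)` is the pure round twin group. -/
theorem fundamentalGroup_annular_configuration_space (n : ℕ) :
    Nonempty (FundamentalGroup (MSet n) ⟨q0 n, QSet_subset_MSet n (q0_mem n)⟩ ≃*
      Multiplicative ℤ × FundamentalGroup (QSet n) (Qbase n)) := by
  have h : splitHomeomorph n ⟨q0 n, QSet_subset_MSet n (q0_mem n)⟩ = (1, Qbase n) := by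
    have h1 := (q0_mem n).1
    refine Prod.ext h1 (Subtype.ext <| funext fun j => ?_)
    change q0 n j * (q0 n (Fin.last n))⁻¹ = q0 n j
    rw [h1, inv_one, mul_one]
  exact ⟨(fundamentalGroupEquivOfHomeomorph (splitHomeomorph n) h).trans <|
    (fundamentalGroupProdEquiv 1 (Qbase n)).trans <|
      fundamentalGroupCircleEquiv.prodCongr (MulEquiv.refl _)⟩
end
end

section
/- For every n ≥ 4, the group homomorphism κ: Υ_n → J_n determined by κ(σ_i) = s_{i,i+1} for 1 ≤ i ≤ n−1 and κ(ζ) = s_{1,n}·s_{2,n} is injective. -/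
/-!
Send `s_{p,q}` to the pair consisting of the subset `[p, q]` and the permutation reversing it. This
maps the cactus group to a semidirect product `D ⋊ Sₙ`, where `D` is the right-angled Coxeter group
with one generator `τ_A` for each set `A` of strands, `τ_A` and `τ_B` commuting when `A` and `B` are
disjoint or nested. The composite of `κ` with this map is already injective. Instead
of `D` itself, any family of involutions `τ_A` of a set `X` with these commutations is used: it
gives a right action of the cactus group on `Sₙ × X` (`cactusAct`).

Reading a word in the letters `σᵢ, ζ, ζ⁻¹` from the left produces, letter by letter, a word of
labels (`labels`): a letter `σᵢ` contributes the pair of strands it exchanges, and `ζ^{±1}`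
contributes the complement of the strand that is carried around (the central contribution of
`s_{1,n}` is discarded). The word acts on `X` by the product of `τ` along these labels (`act_word`).

If two equal labels are separated only by labels independent of them, then the two letters cancel
in the round twin group (`cancel`). Two letters `σ` exchanging the same strands meet because the
letters between them keep these strands adjacent, and only shift their position. For
two letters `ζ^{±1}` carrying the same strand around, the letters between are `σᵢ` not touching that
strand, so the signs are opposite and conjugation by `ζ` only shifts the indices. Here `n ≥ 4`
ensures that pairs and complements of strands have different cardinalities.

If no two labels can be brought together in this way and the word is nonempty, then the solution of
the word problem for right-angled Coxeter groups, in the form of `exists_action`, provides a family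
`τ` for which the word acts nontrivially: `τ_A` toggles the positions labelled `A` in order ideals of
the heap of the word, and the word moves the empty ideal to the full one. Induction on the length of
a word in the kernel concludes.
-/

/-- Generators of the cactus group `Jₙ`: pairs `(p, q)` of `0`-based indices with `p < q`;
the pair `(p, q)` represents the generator `s_{p+1, q+1}` in `1`-based notation. -/
def CactusGen (n : ℕ) : Type := {pq : Fin n × Fin n // pq.1 < pq.2}

/-- The defining relators of the cactus group `Jₙ` (in `0`-based notation):
`s_{p,q}² = 1`; `s_{p,q}s_{m,r} = s_{m,r}s_{p,q}` whenever the intervals `[p,q]` and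
`[m,r]` are disjoint; and `s_{p,q}s_{m,r} = s_{p+q-r,p+q-m}s_{p,q}` whenever
`p ≤ m < r ≤ q`. -/
def cactusRels (n : ℕ) : Set (FreeGroup (CactusGen n)) :=
  {w | (∃ a : CactusGen n, w = FreeGroup.of a * FreeGroup.of a) ∨
       (∃ a b : CactusGen n, (a.1.2 < b.1.1 ∨ b.1.2 < a.1.1) ∧
          w = FreeGroup.of a * FreeGroup.of b * (FreeGroup.of a)⁻¹ * (FreeGroup.of b)⁻¹) ∨
       (∃ a b c : CactusGen n, a.1.1 ≤ b.1.1 ∧ b.1.2 ≤ a.1.2 ∧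
          (c.1.1 : ℕ) = (a.1.1 : ℕ) + (a.1.2 : ℕ) - (b.1.2 : ℕ) ∧
          (c.1.2 : ℕ) = (a.1.1 : ℕ) + (a.1.2 : ℕ) - (b.1.1 : ℕ) ∧
          w = FreeGroup.of a * FreeGroup.of b * (FreeGroup.of a)⁻¹ * (FreeGroup.of c)⁻¹)}

/-- The cactus group `Jₙ`, presented with generators `s_{p,q}`, `1 ≤ p < q ≤ n`, and
relations `s_{p,q}² = 1`, `s_{p,q}s_{m,r} = s_{m,r}s_{p,q}` for `[p,q] ∩ [m,r] = ∅`, and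
`s_{p,q}s_{m,r} = s_{p+q-r,p+q-m}s_{p,q}` for `p ≤ m < r ≤ q`. -/
def CactusGroup (n : ℕ) : Type := PresentedGroup (cactusRels n)

instance (n : ℕ) : Group (CactusGroup n) := inferInstanceAs (Group (PresentedGroup _))

/-- The generator `s_{p+1,q+1}` of the cactus group `Jₙ`. -/
def cactusGen {n : ℕ} (a : CactusGen n) : CactusGroup n := PresentedGroup.of a

/-- The defining relators of the round twin group `Υₙ`, with generators
`Sum.inl i = σ_{i+1}` (for `i : Fin (n-1)`, `0`-based) and `Sum.inr () = ζ`: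
`σᵢ² = 1`; `σᵢσⱼ = σⱼσᵢ` whenever `|i - j| > 1`; and `σᵢζ = ζσ_{i+1}` for
`1 ≤ i ≤ n - 2`. -/
def twinRels (n : ℕ) : Set (FreeGroup (Fin (n - 1) ⊕ Unit)) :=
  {w | (∃ i : Fin (n - 1), w = FreeGroup.of (.inl i) * FreeGroup.of (.inl i)) ∨
       (∃ i j : Fin (n - 1), ((i : ℕ) + 1 < (j : ℕ) ∨ (j : ℕ) + 1 < (i : ℕ)) ∧
          w = FreeGroup.of (.inl i) * FreeGroup.of (.inl j) *
            (FreeGroup.of (.inl i))⁻¹ * (FreeGroup.of (.inl j))⁻¹) ∨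
       (∃ i j : Fin (n - 1), (j : ℕ) = (i : ℕ) + 1 ∧
          w = FreeGroup.of (.inl i) * FreeGroup.of (.inr ()) *
            (FreeGroup.of (.inl j))⁻¹ * (FreeGroup.of (.inr ()))⁻¹)}

/-- The round twin group `Υₙ`, presented with generators `σ₁, …, σ_{n-1}, ζ` and relations
`σᵢ² = 1`, `σᵢσⱼ = σⱼσᵢ` for `|i - j| > 1`, and `σᵢζ = ζσ_{i+1}` for `1 ≤ i ≤ n - 2`. -/
def RoundTwinGroup (n : ℕ) : Type := PresentedGroup (twinRels n)

instance (n : ℕ) : Group (RoundTwinGroup n) := inferInstanceAs (Group (PresentedGroup _))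

/-- The generator `σ_{i+1}` of the round twin group `Υₙ`. -/
def twinSigma {n : ℕ} (i : Fin (n - 1)) : RoundTwinGroup n := PresentedGroup.of (.inl i)

/-- The generator `ζ` of the round twin group `Υₙ`. -/
def twinZeta {n : ℕ} : RoundTwinGroup n := PresentedGroup.of (.inr ())

/-! ### Toggling order ideals of the heap of a word -/

/-- Toggling all removable or addable positions with letter `a` in a set `S` of positions of the
word `x`. Here `D` is the dependence relation on letters: a position is addable when all earlier
positions with dependent letters are present, and removable when all later ones are absent. -/
def toggleSet {α : Type} (D : α → α → Prop) {m : ℕ} (x : Fin m → α) (a : α)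
    (S : Set (Fin m)) : Set (Fin m) :=
  {k | (x k ≠ a ∧ k ∈ S) ∨ (x k = a ∧ k ∈ S ∧ ∃ j, k < j ∧ D (x k) (x j) ∧ j ∈ S) ∨
    (x k = a ∧ k ∉ S ∧ ∀ i, i < k → D (x k) (x i) → i ∈ S)}

/-- Order ideals of the heap of the word `x`: sets of positions containing, with each position,
all earlier positions whose letters are dependent on its letter. -/
def IsIdealSet {α : Type} (D : α → α → Prop) {m : ℕ} (x : Fin m → α) (S : Set (Fin m)) : Prop :=
  ∀ k ∈ S, ∀ i, i < k → D (x k) (x i) → i ∈ S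

section Toggle

variable {α : Type} {D : α → α → Prop} {m : ℕ} {x : Fin m → α}

theorem mem_toggle_ne {a : α} {S : Set (Fin m)} {k : Fin m} (h : x k ≠ a) :
    k ∈ toggleSet D x a S ↔ k ∈ S := by
  simp [toggleSet, h]

theorem mem_toggle_mem {a : α} {S : Set (Fin m)} {k : Fin m} (h : x k = a) (hk : k ∈ S) :
    k ∈ toggleSet D x a S ↔ ∃ j, k < j ∧ D (x k) (x j) ∧ j ∈ S := by
  simp [toggleSet, h, hk]

theorem mem_toggle_notMem {a : α} {S : Set (Fin m)} {k : Fin m} (h : x k = a) (hk : k ∉ S) :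
    k ∈ toggleSet D x a S ↔ ∀ i, i < k → D (x k) (x i) → i ∈ S := by
  simp [toggleSet, h, hk]

theorem toggle_ideal (hs : ∀ a b, D a b → D b a)
    (hred : ∀ i k, i < k → x i = x k → ∃ j, i < j ∧ j < k ∧ x j ≠ x i ∧ D (x i) (x j))
    (a : α) {S : Set (Fin m)} (hS : IsIdealSet D x S) : IsIdealSet D x (toggleSet D x a S) := by
  intro k hk i hik hD
  have hiS : i ∈ S := by
    by_cases hkS : k ∈ S
    · exact hS k hkS i hik hD
    · by_cases hka : x k = a
      · exact (mem_toggle_notMem hka hkS).1 hk i hik hD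
      · exact absurd ((mem_toggle_ne hka).1 hk) hkS
  by_cases hia : x i = a
  · rw [mem_toggle_mem hia hiS]
    by_cases hkS : k ∈ S
    · exact ⟨k, hik, hs _ _ hD, hkS⟩
    · by_cases hka : x k = a
      · obtain ⟨j, h1, h2, h3, h4⟩ := hred i k hik (hia.trans hka.symm)
        refine ⟨j, h1, h4, (mem_toggle_notMem hka hkS).1 hk j h2 ?_⟩
        rwa [hka, ← hia]
      · exact absurd ((mem_toggle_ne hka).1 hk) hkS
  · rwa [mem_toggle_ne hia]

theorem toggle_toggle (hs : ∀ a b, D a b → D b a)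
    (hred : ∀ i k, i < k → x i = x k → ∃ j, i < j ∧ j < k ∧ x j ≠ x i ∧ D (x i) (x j))
    (a : α) {S : Set (Fin m)} (hS : IsIdealSet D x S) :
    toggleSet D x a (toggleSet D x a S) = S := by
  ext k
  by_cases hka : x k = a
  swap
  · rw [mem_toggle_ne hka, mem_toggle_ne hka]
  by_cases hkS : k ∈ S
  · simp only [hkS, iff_true]
    by_cases hrem : ∃ j, k < j ∧ D (x k) (x j) ∧ j ∈ S
    · have hk' : k ∈ toggleSet D x a S := (mem_toggle_mem hka hkS).2 hrem
      rw [mem_toggle_mem hka hk']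
      obtain ⟨j, h1, h2, h3⟩ := hrem
      by_cases hja : x j = a
      · obtain ⟨l, l1, l2, l3, l4⟩ := hred k j h1 (hka.trans hja.symm)
        refine ⟨l, l1, l4, ?_⟩
        rw [mem_toggle_ne (hka ▸ l3)]
        exact hS j h3 l l2 (by rw [hja, ← hka]; exact l4)
      · exact ⟨j, h1, h2, (mem_toggle_ne hja).2 h3⟩
    · have hk' : k ∉ toggleSet D x a S := fun h => hrem ((mem_toggle_mem hka hkS).1 h)
      rw [mem_toggle_notMem hka hk']
      intro i hik hD
      have hiS := hS k hkS i hik hD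
      by_cases hia : x i = a
      · exact (mem_toggle_mem hia hiS).2 ⟨k, hik, hs _ _ hD, hkS⟩
      · exact (mem_toggle_ne hia).2 hiS
  · simp only [hkS, iff_false]
    by_cases hadd : ∀ i, i < k → D (x k) (x i) → i ∈ S
    · have hk' : k ∈ toggleSet D x a S := (mem_toggle_notMem hka hkS).2 hadd
      rw [mem_toggle_mem hka hk']
      rintro ⟨j, h1, h2, h3⟩
      have hjS : j ∉ S := fun h => hkS (hS j h k h1 (hs _ _ h2))
      by_cases hja : x j = a
      · exact hkS ((mem_toggle_notMem hja hjS).1 h3 k h1 (hs _ _ h2))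
      · exact hjS ((mem_toggle_ne hja).1 h3)
    · have hk' : k ∉ toggleSet D x a S := fun h => hadd ((mem_toggle_notMem hka hkS).1 h)
      rw [mem_toggle_notMem hka hk']
      intro hall
      apply hadd
      intro i hik hD
      by_contra hiS
      by_cases hia : x i = a
      · obtain ⟨l, l1, l2, l3, l4⟩ := hred i k hik (hia.trans hka.symm)
        have hl := hall l l2 (by rw [hka, ← hia]; exact l4)
        rw [mem_toggle_ne (hia ▸ l3)] at hl
        exact hiS (hS l hl i l1 (hs _ _ l4))
      · exact hiS ((mem_toggle_ne hia).1 (hall i hik hD))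

/-- Whether a position with letter `a` survives a toggle at `a` depends only on positions with
letters dependent on `a`, and these are untouched by a toggle at an independent letter `b`. -/
theorem mem_toggle_toggle_of_indep {a b : α} (hr : ∀ a, D a a) (hab : ¬ D a b) (S : Set (Fin m))
    {k : Fin m} (hka : x k = a) :
    k ∈ toggleSet D x a (toggleSet D x b S) ↔ k ∈ toggleSet D x a S := by
  have key : ∀ j, D (x k) (x j) → (j ∈ toggleSet D x b S ↔ j ∈ S) := by
    intro j hj
    apply mem_toggle_ne
    rintro rfl
    exact hab (hka ▸ hj)
  have hk := key k (hr _)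
  by_cases hkS : k ∈ S
  · rw [mem_toggle_mem hka hkS, mem_toggle_mem hka (hk.2 hkS)]
    constructor
    · rintro ⟨j, h1, h2, h3⟩
      exact ⟨j, h1, h2, (key j h2).1 h3⟩
    · rintro ⟨j, h1, h2, h3⟩
      exact ⟨j, h1, h2, (key j h2).2 h3⟩
  · rw [mem_toggle_notMem hka hkS, mem_toggle_notMem hka (fun h => hkS (hk.1 h))]
    constructor
    · intro h i hik hD
      exact (key i hD).1 (h i hik hD)
    · intro h i hik hD
      exact (key i hD).2 (h i hik hD)

theorem toggle_comm {a b : α} (hr : ∀ a, D a a) (hs : ∀ a b, D a b → D b a)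
    (hab : ¬ D a b) (S : Set (Fin m)) :
    toggleSet D x a (toggleSet D x b S) = toggleSet D x b (toggleSet D x a S) := by
  have hne : a ≠ b := by rintro rfl; exact hab (hr _)
  ext k
  by_cases hka : x k = a
  · rw [mem_toggle_toggle_of_indep hr hab S hka, mem_toggle_ne (a := b) (by rw [hka]; exact hne)]
  · by_cases hkb : x k = b
    · rw [mem_toggle_toggle_of_indep hr (fun h => hab (hs _ _ h)) S hkb, mem_toggle_ne hka]
    · rw [mem_toggle_ne hka, mem_toggle_ne hkb, mem_toggle_ne hkb, mem_toggle_ne hka]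

theorem toggle_initial (hr : ∀ a, D a a)
    (hred : ∀ i k, i < k → x i = x k → ∃ j, i < j ∧ j < k ∧ x j ≠ x i ∧ D (x i) (x j))
    (t : Fin m) : toggleSet D x (x t) {k | k < t} = {k | k ≤ t} := by
  ext k
  simp only [Set.mem_ofPred_eq]
  by_cases hk : x k = x t
  · by_cases hkt : k < t
    · rw [mem_toggle_mem hk hkt]
      obtain ⟨j, h1, h2, h3, h4⟩ := hred k t hkt hk
      exact ⟨fun _ => hkt.le, fun _ => ⟨j, h1, h4, h2⟩⟩
    · rw [mem_toggle_notMem hk hkt]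
      constructor
      · intro h
        by_contra hlt
        exact lt_irrefl t (h t (not_le.1 hlt) (by rw [hk]; exact hr _))
      · intro h i hik _
        exact lt_of_lt_of_le hik h
  · rw [mem_toggle_ne hk]
    have : k ≠ t := by rintro rfl; exact hk rfl
    exact ⟨fun h => le_of_lt h, fun h => lt_of_le_of_ne h this⟩

end Toggle

/-- The word problem for a right-angled Coxeter group, in the form of an action: if no letter of
the nonempty word `l` can be shuffled next to another copy of itself through independent letters,
then there are involutions, commuting for independent letters, whose product along `l` moves a
point. They act by toggles on the order ideals of the heap of `l`. -/
theorem exists_action {α : Type} (D : α → α → Prop) (hr : ∀ a, D a a)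
    (hs : ∀ a b, D a b → D b a) (l : List α) (hl : l ≠ [])
    (H : ∀ P a U Q, l = P ++ a :: (U ++ a :: Q) → ∃ b ∈ U, D a b) :
    ∃ (X : Type) (τ : α → Equiv.Perm X) (x₀ : X), (∀ a, τ a * τ a = 1) ∧
      (∀ a b, ¬ D a b → τ a * τ b = τ b * τ a) ∧ (∀ a, a ∉ l → τ a = 1) ∧
      l.foldl (fun S a => τ a S) x₀ ≠ x₀ := by
  classical
  have H1 : ∀ i k : Fin l.length, i < k → l.get i = l.get k →
      ∃ j, i < j ∧ j < k ∧ D (l.get i) (l.get j) := by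
    intro i k hik he
    obtain ⟨i, hi⟩ := i
    obtain ⟨k, hk⟩ := k
    simp only [List.get_eq_getElem, Fin.mk_lt_mk] at he hik ⊢
    have hsplit : l = l.take i ++ l[i] :: ((l.drop (i+1)).take (k-i-1) ++ l[i] :: l.drop (k+1)) := by
      have e1 : l = l.take i ++ l.drop i := (List.take_append_drop i l).symm
      have e2 : l.drop i = l[i] :: l.drop (i+1) := List.drop_eq_getElem_cons hi
      have e3 : l.drop (i+1) = (l.drop (i+1)).take (k-i-1) ++ (l.drop (i+1)).drop (k-i-1) :=
        (List.take_append_drop _ _).symm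
      have e4 : (l.drop (i+1)).drop (k-i-1) = l[i] :: l.drop (k+1) := by
        rw [List.drop_drop, show i+1+(k-i-1) = k by omega, List.drop_eq_getElem_cons hk, he]
      rw [← e4, ← e3, ← e2, ← e1]
    obtain ⟨b, hb, hD⟩ := H _ _ _ _ hsplit
    obtain ⟨j, hj, rfl⟩ := List.getElem_of_mem hb
    have hj' := hj
    simp only [List.length_take, List.length_drop] at hj'
    refine ⟨⟨i+1+j, by omega⟩, ?_, ?_, ?_⟩
    · simp only [Fin.mk_lt_mk]; omega
    · simp only [Fin.mk_lt_mk]; omega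
    · simpa using hD
  have hred : ∀ i k : Fin l.length, i < k → l.get i = l.get k →
      ∃ j, i < j ∧ j < k ∧ l.get j ≠ l.get i ∧ D (l.get i) (l.get j) := by
    intro i k
    induction k using WellFoundedLT.induction with
    | ind k ih =>
      intro hik he
      obtain ⟨j, h1, h2, h3⟩ := H1 i k hik he
      by_cases hj : l.get j = l.get i
      · obtain ⟨j', a1, a2, a3, a4⟩ := ih j h2 h1 hj.symm
        exact ⟨j', a1, a2.trans h2, a3, a4⟩
      · exact ⟨j, h1, h2, hj, h3⟩
  let X : Type := {S : Set (Fin l.length) // IsIdealSet D l.get S}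
  let f : α → X → X := fun a S => ⟨toggleSet D l.get a S.1, toggle_ideal hs hred a S.2⟩
  have hf : ∀ a, Function.Involutive (f a) := fun a S =>
    Subtype.ext (toggle_toggle hs hred a S.2)
  let x₀ : X := ⟨∅, fun k hk => hk.elim⟩
  refine ⟨X, fun a => (hf a).toPerm, x₀, ?_, ?_, ?_, ?_⟩
  · intro a
    ext1 S
    exact hf a S
  · intro a b hab
    ext1 S
    exact Subtype.ext (toggle_comm hr hs hab S.1)
  · intro a ha
    ext1 S
    apply Subtype.ext
    ext k
    exact mem_toggle_ne (fun h => ha (h ▸ List.get_mem l k))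
  · have key : ∀ t ≤ l.length, ((l.take t).foldl (fun S a => f a S) x₀).1 =
        {k : Fin l.length | (k : ℕ) < t} := by
      intro t
      induction t with
      | zero => intro _; simp [x₀]
      | succ t ih =>
        intro ht
        have ht' : t < l.length := ht
        rw [← List.take_concat_get' _ _ ht', List.foldl_append]
        simp only [List.foldl_cons, List.foldl_nil]
        change toggleSet D l.get (l.get ⟨t, ht'⟩) _ = _
        rw [ih (by omega)]
        refine Eq.trans (toggle_initial hr hred ⟨t, ht'⟩) ?_
        ext k
        simp only [Set.mem_ofPred_eq, Fin.le_def]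
        omega
    have h1 := key l.length le_rfl
    rw [List.take_length] at h1
    have hpos : 0 < l.length := List.length_pos_of_ne_nil hl
    intro h0
    have h2 : (⟨0, hpos⟩ : Fin l.length) ∈ (l.foldl (fun S a => f a S) x₀).1 := by
      rw [h1]; exact hpos
    have h3 : l.foldl (fun S a => f a S) x₀ = x₀ := h0
    rw [h3] at h2
    exact h2

/-! ### An action of the cactus group -/

/-- The reflection of the interval `[p, q]`, fixing all points outside it. -/
def revFun {n : ℕ} (p q : Fin n) (i : Fin n) : Fin n :=
  if h : p ≤ i ∧ i ≤ q then ⟨(p : ℕ) + q - i, by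
    have := h.1; have := h.2; have := q.isLt; simp only [Fin.le_def] at *; omega⟩ else i

theorem revFun_val {n : ℕ} (p q i : Fin n) : (revFun p q i : ℕ) =
    if (p : ℕ) ≤ i ∧ (i : ℕ) ≤ q then (p : ℕ) + q - i else i := by
  unfold revFun
  simp only [Fin.le_def]
  split_ifs <;> rfl

theorem revFun_invol {n : ℕ} (p q : Fin n) : Function.Involutive (revFun p q) := by
  intro i
  apply Fin.ext
  rw [revFun_val, revFun_val]
  split_ifs <;> omega

/-- The permutation underlying the cactus group generator `s_{p,q}`. -/
def rev {n : ℕ} (p q : Fin n) : Equiv.Perm (Fin n) := (revFun_invol p q).toPerm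

theorem rev_val {n : ℕ} (p q i : Fin n) : (rev p q i : ℕ) =
    if (p : ℕ) ≤ i ∧ (i : ℕ) ≤ q then (p : ℕ) + q - i else i := revFun_val p q i

theorem rev_mul_self {n : ℕ} (p q : Fin n) : rev p q * rev p q = 1 :=
  Equiv.ext fun i => revFun_invol p q i

theorem rev_comm {n : ℕ} (p q m r : Fin n) (h : q < m ∨ r < p) :
    rev p q * rev m r = rev m r * rev p q := by
  ext i
  simp only [Equiv.Perm.mul_apply, rev_val, Fin.lt_def] at *
  split_ifs <;> omega

theorem rev_nest {n : ℕ} (p q m r m' r' : Fin n) (h1 : p ≤ m) (h2 : r ≤ q)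
    (hm : (m' : ℕ) = p + q - r) (hr : (r' : ℕ) = p + q - m) :
    rev p q * rev m r = rev m' r' * rev p q := by
  ext i
  simp only [Equiv.Perm.mul_apply, rev_val, Fin.le_def] at *
  split_ifs <;> omega

theorem image_rev_of {n : ℕ} (p q : Fin n) (A B : Finset (Fin n))
    (h : ∀ i, i ∈ B ↔ rev p q i ∈ A) : A.image (rev p q) = B := by
  ext i
  rw [Finset.mem_image, h]
  constructor
  · rintro ⟨j, hj, rfl⟩
    rwa [show rev p q (rev p q j) = j from revFun_invol p q j]
  · intro hi
    exact ⟨_, hi, revFun_invol p q i⟩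

theorem image_mul {n : ℕ} (g h : Equiv.Perm (Fin n)) (A : Finset (Fin n)) :
    A.image (g * h) = (A.image h).image g := by
  rw [Finset.image_image]; rfl

theorem image_rev_self {n : ℕ} (p q : Fin n) :
    (Finset.Icc p q).image (rev p q) = Finset.Icc p q := by
  apply image_rev_of
  intro i
  simp only [Finset.mem_Icc, Fin.le_def, rev_val]
  split_ifs <;> omega

theorem image_rev_disj {n : ℕ} (p q m r : Fin n) (h : q < m ∨ r < p) :
    (Finset.Icc m r).image (rev p q) = Finset.Icc m r := by
  apply image_rev_of
  intro i
  simp only [Finset.mem_Icc, Fin.le_def, rev_val, Fin.lt_def] at *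
  split_ifs <;> omega

theorem image_rev_nest {n : ℕ} (p q m r m' r' : Fin n) (h1 : p ≤ m) (h2 : r ≤ q)
    (hmr : m < r) (hm : (m' : ℕ) = p + q - r) (hr : (r' : ℕ) = p + q - m) :
    (Finset.Icc m r).image (rev p q) = Finset.Icc m' r' := by
  apply image_rev_of
  intro i
  simp only [Finset.mem_Icc, Fin.le_def, rev_val, Fin.lt_def] at *
  split_ifs <;> omega

/-- Dependence of subsets of `{1, …, n}`: distinct subsets are independent precisely when they are
disjoint or nested. -/
def Dep {n : ℕ} (A B : Finset (Fin n)) : Prop :=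
  A = B ∨ ¬ (Disjoint A B ∨ A ⊆ B ∨ B ⊆ A)

theorem Dep.refl {n : ℕ} (A : Finset (Fin n)) : Dep A A := Or.inl rfl

theorem Dep.symm {n : ℕ} {A B : Finset (Fin n)} (h : Dep A B) : Dep B A := by
  rcases h with rfl | h
  · exact Or.inl rfl
  · refine Or.inr fun h' => h ?_
    rcases h' with h' | h' | h'
    · exact Or.inl h'.symm
    · exact Or.inr (Or.inr h')
    · exact Or.inr (Or.inl h')

theorem dep_image {n : ℕ} (g : Equiv.Perm (Fin n)) (A B : Finset (Fin n)) :
    Dep (A.image g) (B.image g) ↔ Dep A B := by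
  unfold Dep
  rw [Finset.disjoint_image g.injective, Finset.image_subset_image_iff g.injective,
    Finset.image_subset_image_iff g.injective, (Finset.image_injective g.injective).eq_iff]

section Action

variable {n : ℕ} {X : Type} (τ : Finset (Fin n) → Equiv.Perm X) (hτ : ∀ A, τ A * τ A = 1)

/-- The action of `s_{p,q}` on pairs of a permutation `g` and a point of `X`: it applies `τ` at the
set of strands `g [p, q]` and then reverses these strands. -/
def genFun (a : CactusGen n) (y : Equiv.Perm (Fin n) × X) : Equiv.Perm (Fin n) × X :=
  (y.1 * rev a.1.1 a.1.2, τ ((Finset.Icc a.1.1 a.1.2).image y.1) y.2)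

include hτ in
theorem genFun_invol (a : CactusGen n) : Function.Involutive (genFun τ a) := by
  rintro ⟨g, x⟩
  simp only [genFun, mul_assoc, rev_mul_self, mul_one, image_mul, image_rev_self]
  rw [← Equiv.Perm.mul_apply, hτ]
  rfl

/-- The involution of `Perm (Fin n) × X` by which a cactus generator acts. It acts on the right, so
it is recorded in the opposite group. -/
def genPerm (a : CactusGen n) : (Equiv.Perm (Equiv.Perm (Fin n) × X))ᵐᵒᵖ :=
  MulOpposite.op (genFun_invol τ hτ a).toPerm

theorem genPerm_rels (hc : ∀ A B, ¬ Dep A B → τ A * τ B = τ B * τ A)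
    (w : FreeGroup (CactusGen n)) (hw : w ∈ cactusRels n) :
    FreeGroup.lift (genPerm τ hτ) w = 1 := by
  have hc' : ∀ A B, (Disjoint A B ∨ A ⊆ B ∨ B ⊆ A) → ∀ x, τ A (τ B x) = τ B (τ A x) := by
    intro A B h x
    by_cases hAB : A = B
    · rw [hAB]
    · have := hc A B (by unfold Dep; tauto)
      rw [← Equiv.Perm.mul_apply, this, Equiv.Perm.mul_apply]
  rcases hw with ⟨a, rfl⟩ | ⟨a, b, h, rfl⟩ | ⟨a, b, c, h1, h2, h3, h4, rfl⟩
  · simp only [map_mul, FreeGroup.lift_apply_of]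
    apply MulOpposite.unop_injective
    ext1 y
    exact genFun_invol τ hτ a y
  · simp only [map_mul, map_inv, FreeGroup.lift_apply_of]
    rw [mul_inv_eq_one, mul_inv_eq_iff_eq_mul]
    apply MulOpposite.unop_injective
    ext1 ⟨g, x⟩
    change genFun τ b (genFun τ a (g, x)) = genFun τ a (genFun τ b (g, x))
    simp only [genFun, image_mul, mul_assoc]
    rw [image_rev_disj _ _ _ _ h, image_rev_disj _ _ _ _ h.symm, rev_comm _ _ _ _ h, hc']
    left
    rw [Finset.disjoint_image g.injective, Finset.disjoint_left]
    intro i hi hj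
    simp only [Finset.mem_Icc, Fin.le_def, Fin.lt_def] at *
    omega
  · simp only [map_mul, map_inv, FreeGroup.lift_apply_of]
    rw [mul_inv_eq_one, mul_inv_eq_iff_eq_mul]
    apply MulOpposite.unop_injective
    ext1 ⟨g, x⟩
    change genFun τ b (genFun τ a (g, x)) = genFun τ a (genFun τ c (g, x))
    have h5 := image_rev_nest _ _ _ _ _ _ h1 h2 b.2 h3 h4
    have h6 : (Finset.Icc a.1.1 a.1.2).image (rev c.1.1 c.1.2) = Finset.Icc a.1.1 a.1.2 := by
      have := b.2
      apply image_rev_of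
      intro i
      simp only [Finset.mem_Icc, Fin.le_def, rev_val, Fin.lt_def] at *
      split_ifs <;> omega
    simp only [genFun, image_mul, mul_assoc]
    rw [h5, h6, rev_nest _ _ _ _ _ _ h1 h2 h3 h4, hc']
    right; left
    apply Finset.image_subset_image
    have := b.2
    intro i hi
    simp only [Finset.mem_Icc, Fin.le_def, Fin.lt_def] at *
    omega

/-- The right action of the cactus group on `Perm (Fin n) × X` induced by a family of involutions
`τ` of `X` indexed by subsets of `{1, …, n}`. -/
def cactusAct (hc : ∀ A B, ¬ Dep A B → τ A * τ B = τ B * τ A) :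
    CactusGroup n →* (Equiv.Perm (Equiv.Perm (Fin n) × X))ᵐᵒᵖ :=
  PresentedGroup.toGroup (genPerm_rels τ hτ hc)

theorem cactusAct_gen (hc : ∀ A B, ¬ Dep A B → τ A * τ B = τ B * τ A) (a : CactusGen n) :
    cactusAct τ hτ hc (cactusGen a) = genPerm τ hτ a :=
  PresentedGroup.toGroup.of (genPerm_rels τ hτ hc)

end Action

/-! ### Words in the round twin group and their labels -/

/-- Letters of words representing elements of the round twin group: `σ_{i+1}`, `ζ` and `ζ⁻¹`. -/
inductive Letter (n : ℕ) : Type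
  | s (i : Fin (n - 1)) : Letter n
  | z : Letter n
  | zi : Letter n

namespace Letter

variable {n : ℕ}

/-- The element of the round twin group that a letter stands for. -/
def val : Letter n → RoundTwinGroup n
  | s i => twinSigma i
  | z => twinZeta
  | zi => twinZeta⁻¹

theorem lo_lt (i : Fin (n - 1)) : (i : ℕ) < n := lt_of_lt_of_le i.isLt (Nat.sub_le n 1)

theorem hi_lt (i : Fin (n - 1)) : (i : ℕ) + 1 < n := Nat.add_lt_of_lt_sub i.isLt

theorem fst_lt (hn : 4 ≤ n) : 0 < n := lt_of_lt_of_le (Nat.succ_pos 3) hn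

theorem snd_lt (hn : 4 ≤ n) : 1 < n := lt_of_lt_of_le (Nat.succ_lt_succ (Nat.succ_pos 2)) hn

theorem lst_lt (hn : 4 ≤ n) : n - 1 < n := Nat.sub_lt (fst_lt hn) Nat.one_pos

/-- The left strand position moved by `σ_{i+1}`. -/
def lo (i : Fin (n - 1)) : Fin n := ⟨i, lo_lt i⟩

/-- The right strand position moved by `σ_{i+1}`. -/
def hi (i : Fin (n - 1)) : Fin n := ⟨i + 1, hi_lt i⟩

/-- The first strand position. -/
def fst (hn : 4 ≤ n) : Fin n := ⟨0, fst_lt hn⟩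

/-- The second strand position. -/
def snd (hn : 4 ≤ n) : Fin n := ⟨1, snd_lt hn⟩

/-- The last strand position. -/
def lst (hn : 4 ≤ n) : Fin n := ⟨n - 1, lst_lt hn⟩

/-- The permutation induced by a letter, through the image of `κ` in the symmetric group. -/
def perm (hn : 4 ≤ n) : Letter n → Equiv.Perm (Fin n)
  | s i => rev (lo i) (hi i)
  | z => rev (fst hn) (lst hn) * rev (snd hn) (lst hn)
  | zi => rev (snd hn) (lst hn) * rev (fst hn) (lst hn)

/-- The set of positions at which `τ` acts for a letter. The generator `s_{1,n}` in `κ ζ` does not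
count, as its set of positions is everything. -/
def base (hn : 4 ≤ n) : Letter n → Finset (Fin n)
  | s i => Finset.Icc (lo i) (hi i)
  | z => Finset.univ.erase (lst hn)
  | zi => Finset.univ.erase (fst hn)

end Letter

open Letter

section Words

variable {n : ℕ} (hn : 4 ≤ n)

/-- The element of the round twin group represented by a word. -/
def wval (W : List (Letter n)) : RoundTwinGroup n := (W.map Letter.val).prod

/-- The permutation induced by a word. -/
def wperm (W : List (Letter n)) : Equiv.Perm (Fin n) := (W.map (Letter.perm hn)).prod

/-- The sets of strands at which the successive letters of a word act, starting from the
arrangement `g` of the strands. -/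
def labels : Equiv.Perm (Fin n) → List (Letter n) → List (Finset (Fin n))
  | _, [] => []
  | g, L :: W => (L.base hn).image g :: labels (g * L.perm hn) W

theorem wval_cons (L : Letter n) (W : List (Letter n)) : wval (L :: W) = L.val * wval W := by
  simp [wval]

theorem wval_append (V W : List (Letter n)) : wval (V ++ W) = wval V * wval W := by
  simp [wval]

theorem wperm_cons (L : Letter n) (W : List (Letter n)) :
    wperm hn (L :: W) = L.perm hn * wperm hn W := by
  simp [wperm]

theorem labels_split (A B : List (Finset (Fin n))) : ∀ (g : Equiv.Perm (Fin n))
    (W : List (Letter n)), labels hn g W = A ++ B →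
      ∃ W₁ W₂, W = W₁ ++ W₂ ∧ labels hn g W₁ = A ∧ labels hn (g * wperm hn W₁) W₂ = B := by
  induction A with
  | nil => intro g W h; exact ⟨[], W, rfl, rfl, by simpa [wperm] using h⟩
  | cons a A ih =>
    intro g W h
    cases W with
    | nil => simp [labels] at h
    | cons L W =>
      simp only [labels, List.cons_append, List.cons.injEq] at h
      obtain ⟨W₁, W₂, rfl, h1, h2⟩ := ih _ _ h.2
      refine ⟨L :: W₁, W₂, rfl, ?_, ?_⟩
      · rw [labels, h.1, h1]
      · rw [wperm_cons, ← mul_assoc, h2]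

theorem labels_split_cons (a : Finset (Fin n)) (B : List (Finset (Fin n)))
    (g : Equiv.Perm (Fin n)) (W : List (Letter n)) (h : labels hn g W = a :: B) :
      ∃ L W₂, W = L :: W₂ ∧ (L.base hn).image g = a ∧ labels hn (g * L.perm hn) W₂ = B := by
  cases W with
  | nil => simp [labels] at h
  | cons L W =>
    simp only [labels, List.cons.injEq] at h
    exact ⟨L, W, rfl, h.1, h.2⟩

/-! ### Relations in the round twin group -/

theorem twin_sq (i : Fin (n - 1)) : (twinSigma i : RoundTwinGroup n) * twinSigma i = 1 :=
  PresentedGroup.one_of_mem (rels := twinRels n) (Or.inl ⟨i, rfl⟩)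

theorem twin_comm (i j : Fin (n - 1)) (h : (i : ℕ) + 1 < j ∨ (j : ℕ) + 1 < i) :
    (twinSigma i : RoundTwinGroup n) * twinSigma j = twinSigma j * twinSigma i := by
  have := PresentedGroup.one_of_mem (rels := twinRels n) (Or.inr (Or.inl ⟨i, j, h, rfl⟩))
  simp only [map_mul, map_inv] at this
  rw [mul_inv_eq_one, mul_inv_eq_iff_eq_mul] at this
  exact this

theorem twin_shift (i j : Fin (n - 1)) (h : (j : ℕ) = i + 1) :
    (twinSigma i : RoundTwinGroup n) * twinZeta = twinZeta * twinSigma j := by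
  have := PresentedGroup.one_of_mem (rels := twinRels n) (Or.inr (Or.inr ⟨i, j, h, rfl⟩))
  simp only [map_mul, map_inv] at this
  rw [mul_inv_eq_one, mul_inv_eq_iff_eq_mul] at this
  exact this

theorem exists_word (y : RoundTwinGroup n) : ∃ W : List (Letter n), wval W = y := by
  obtain ⟨w, rfl⟩ := PresentedGroup.mk_surjective (twinRels n) y
  induction w using FreeGroup.induction_on with
  | C1 => exact ⟨[], by simp only [wval, List.map_nil, List.prod_nil, map_one]; rfl⟩
  | of x =>
    rcases x with i | u
    · exact ⟨[.s i], by simp only [wval, List.map_cons, List.map_nil, List.prod_singleton]; rfl⟩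
    · exact ⟨[.z], by simp only [wval, List.map_cons, List.map_nil, List.prod_singleton]; rfl⟩
  | inv_of x h =>
    rcases x with i | u
    · refine ⟨[.s i], ?_⟩
      simp only [wval, List.map_cons, List.map_nil, List.prod_singleton, map_inv]
      exact eq_inv_of_mul_eq_one_left (twin_sq i)
    · exact ⟨[.zi], by
        simp only [wval, List.map_cons, List.map_nil, List.prod_singleton, map_inv]; rfl⟩
  | mul a b ha hb =>
    obtain ⟨V, hV⟩ := ha
    obtain ⟨W, hW⟩ := hb
    exact ⟨V ++ W, by rw [wval_append, hV, hW, map_mul]; rfl⟩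

/-! ### Combinatorics of labels -/

theorem mem_base_s (i : Fin (n - 1)) (j : Fin n) :
    j ∈ (Letter.s i : Letter n).base hn ↔ (j : ℕ) = i ∨ (j : ℕ) = i + 1 := by
  simp only [Letter.base, Finset.mem_Icc, Fin.le_def, lo, hi]
  omega

theorem base_s_eq_iff (i j : Fin (n - 1))
    (h : (Letter.s i : Letter n).base hn = (Letter.s j).base hn) : i = j := by
  have h1 := (mem_base_s hn j (lo i)).1 (h ▸ (mem_base_s hn i (lo i)).2 (Or.inl rfl))
  have h2 := (mem_base_s hn j (hi i)).1 (h ▸ (mem_base_s hn i (hi i)).2 (Or.inr rfl))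
  apply Fin.ext
  simp only [lo, hi] at h1 h2
  omega

/-- Independent adjacent pairs of positions are far apart. -/
theorem far_of_not_dep (i j : Fin (n - 1))
    (h : ¬ Dep ((Letter.s i : Letter n).base hn) ((Letter.s j).base hn)) :
    (i : ℕ) + 1 < j ∨ (j : ℕ) + 1 < i := by
  by_contra hc
  apply h
  by_cases hij : i = j
  · subst hij; exact Or.inl rfl
  have hij' : (i : ℕ) ≠ j := fun h => hij (Fin.ext h)
  refine Or.inr ?_
  rintro (h' | h' | h')
  · rw [Finset.disjoint_left] at h'
    have a1 := h' ((mem_base_s hn i (lo i)).2 (Or.inl rfl))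
    have a2 := h' ((mem_base_s hn i (hi i)).2 (Or.inr rfl))
    rw [mem_base_s] at a1 a2
    simp only [lo, hi] at a1 a2
    omega
  · have a1 := h' ((mem_base_s hn i (lo i)).2 (Or.inl rfl))
    have a2 := h' ((mem_base_s hn i (hi i)).2 (Or.inr rfl))
    rw [mem_base_s] at a1 a2
    simp only [lo, hi] at a1 a2
    omega
  · have a1 := h' ((mem_base_s hn j (lo j)).2 (Or.inl rfl))
    have a2 := h' ((mem_base_s hn j (hi j)).2 (Or.inr rfl))
    rw [mem_base_s] at a1 a2
    simp only [lo, hi] at a1 a2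
    omega

theorem not_mem_of_not_dep (i : Fin (n - 1)) (k : Fin n)
    (h : ¬ Dep ((Letter.s i : Letter n).base hn) (Finset.univ.erase k)) :
    k ∉ (Letter.s i : Letter n).base hn := by
  intro hk
  apply h
  refine Or.inr ?_
  rw [mem_base_s] at hk
  have hi1 : lo i ∈ (Letter.s i : Letter n).base hn := (mem_base_s hn i _).2 (Or.inl rfl)
  have hi2 : hi i ∈ (Letter.s i : Letter n).base hn := (mem_base_s hn i _).2 (Or.inr rfl)
  have l1 : ((lo i : Fin n) : ℕ) = i := rfl
  have l2 : ((hi i : Fin n) : ℕ) = i + 1 := rfl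
  rintro (h' | h' | h')
  · rw [Finset.disjoint_left] at h'
    have a1 := h' hi1
    have a2 := h' hi2
    simp only [Finset.mem_erase, Finset.mem_univ, and_true, not_not, Fin.ext_iff] at a1 a2
    omega
  · have a1 := h' hi1
    have a2 := h' hi2
    simp only [Finset.mem_erase, Finset.mem_univ, and_true, ne_eq, Fin.ext_iff] at a1 a2
    omega
  -- As `n ≥ 4`, some position avoids both strands of `σ_{i+1}`, and hence also `k`.
  · have : ∃ m : ℕ, m < 4 ∧ m ≠ i ∧ m ≠ i + 1 := by
      by_cases h0 : (i : ℕ) ≤ 1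
      · exact ⟨3, by omega⟩
      · exact ⟨0, by omega⟩
    obtain ⟨m, hm, m1, m2⟩ := this
    have a := h' (x := ⟨m, by omega⟩)
      (by simp only [Finset.mem_erase, Finset.mem_univ, and_true, ne_eq, Fin.ext_iff]; omega)
    rw [mem_base_s] at a
    simp only at a
    omega

include hn in
theorem dep_erase (k l : Fin n) :
    Dep (Finset.univ.erase k : Finset (Fin n)) (Finset.univ.erase l) := by
  by_cases hkl : k = l
  · exact Or.inl (by rw [hkl])
  refine Or.inr ?_
  rintro (h' | h' | h')
  · have hc : ((Finset.univ.erase k : Finset (Fin n)) ∪ Finset.univ.erase l).card ≤ n := by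
      simpa using Finset.card_le_univ
        ((Finset.univ.erase k : Finset (Fin n)) ∪ Finset.univ.erase l)
    rw [Finset.card_union_of_disjoint h', Finset.card_erase_of_mem (Finset.mem_univ _),
      Finset.card_erase_of_mem (Finset.mem_univ _), Finset.card_univ, Fintype.card_fin] at hc
    omega
  · have := h' (x := l) (by simp [Ne.symm hkl])
    simp at this
  · have := h' (x := k) (by simp [hkl])
    simp at this

theorem image_erase (g : Equiv.Perm (Fin n)) (k : Fin n) :
    (Finset.univ.erase k).image g = Finset.univ.erase (g k) := by
  rw [Finset.image_erase g.injective, Finset.image_univ_equiv]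

theorem erase_inj {k l : Fin n}
    (h : (Finset.univ.erase k : Finset (Fin n)) = Finset.univ.erase l) : k = l := by
  by_contra hkl
  have : l ∈ (Finset.univ.erase k : Finset (Fin n)) := by simp [Ne.symm hkl]
  rw [h] at this
  simp at this

theorem card_base_s (i : Fin (n - 1)) : ((Letter.s i : Letter n).base hn).card = 2 := by
  simp only [Letter.base, Fin.card_Icc, lo, hi]
  omega

/-- The label of some `σ_i` is never that of `ζ` or `ζ⁻¹`: for `n ≥ 4` the cardinalities `2` and
`n - 1` differ. -/
theorem base_ne (i : Fin (n - 1)) (g h : Equiv.Perm (Fin n)) (k : Fin n) :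
    ((Letter.s i : Letter n).base hn).image g ≠ (Finset.univ.erase k).image h := by
  intro he
  have := congrArg Finset.card he
  rw [Finset.card_image_of_injective _ g.injective, Finset.card_image_of_injective _ h.injective,
    card_base_s, Finset.card_erase_of_mem (Finset.mem_univ _), Finset.card_univ,
    Fintype.card_fin] at this
  omega

theorem perm_z_val (i : Fin n) : ((Letter.z : Letter n).perm hn i : ℕ) =
    if (i : ℕ) = 0 then n - 1 else i - 1 := by
  have := i.isLt
  simp only [Letter.perm, Equiv.Perm.mul_apply, rev_val, fst, snd, lst]
  split_ifs <;> omega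

theorem perm_zi_val (i : Fin n) : ((Letter.zi : Letter n).perm hn i : ℕ) =
    if (i : ℕ) = n - 1 then (0 : ℕ) else (i : ℕ) + 1 := by
  have := i.isLt
  simp only [Letter.perm, Equiv.Perm.mul_apply, rev_val, fst, snd, lst]
  split_ifs <;> omega

theorem perm_s_fix (i : Fin (n - 1)) (k : Fin n) (h : k ∉ (Letter.s i : Letter n).base hn) :
    (Letter.s i : Letter n).perm hn k = k := by
  rw [mem_base_s] at h
  apply Fin.ext
  simp only [Letter.perm, rev_val, lo, hi]
  split_ifs <;> omega

theorem perm_z_mul_zi : (Letter.z : Letter n).perm hn * (Letter.zi : Letter n).perm hn = 1 := by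
  simp only [Letter.perm]
  rw [mul_assoc, ← mul_assoc (rev (snd hn) (lst hn)), rev_mul_self, one_mul, rev_mul_self]

theorem base_z_shift (i j : Fin (n - 1)) (h : (j : ℕ) = i + 1) :
    ((Letter.s j : Letter n).base hn).image (Letter.z.perm hn) = (Letter.s i).base hn := by
  ext k
  simp only [Finset.mem_image, mem_base_s]
  constructor
  · rintro ⟨l, hl, rfl⟩
    rw [perm_z_val]
    split_ifs <;> omega
  · intro hk
    have := j.isLt
    refine ⟨⟨k + 1, by omega⟩, by simp only; omega, ?_⟩
    apply Fin.ext
    rw [perm_z_val]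
    simp

theorem base_zi_shift (i j : Fin (n - 1)) (h : (j : ℕ) = i + 1) :
    ((Letter.s i : Letter n).base hn).image (Letter.zi.perm hn) = (Letter.s j).base hn := by
  rw [← base_z_shift hn i j h, ← image_mul, mul_eq_one_comm.1 (perm_z_mul_zi hn)]
  exact Finset.image_id

/-! ### Cancellation -/

/-- If all letters of `U` are independent of the strands exchanged by `σ_{a+1}`, then `σ_{a+1}` can
be moved past `U`; it becomes the generator exchanging the same two strands. -/
theorem push_s (U : List (Letter n)) : ∀ (g : Equiv.Perm (Fin n)) (a : Fin (n - 1)),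
    (∀ B ∈ labels hn g U, ¬ Dep (((Letter.s a : Letter n).base hn).image g) B) →
    ∃ b, twinSigma a * wval U = wval U * twinSigma b ∧
      ((Letter.s b : Letter n).base hn).image (g * wperm hn U) =
        ((Letter.s a : Letter n).base hn).image g := by
  induction U with
  | nil => intro g a _; exact ⟨a, by simp [wval], by simp [wperm]⟩
  | cons L U ih =>
    intro g a h
    have h1 : ¬ Dep ((Letter.s a : Letter n).base hn) (L.base hn) := by
      rw [← dep_image g]
      exact h _ (by simp [labels])
    -- It suffices to move `σ_{a+1}` past the first letter.
    have step : ∀ c, (Letter.val (.s a) * L.val = L.val * Letter.val (.s c)) →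
        ((Letter.s c : Letter n).base hn).image (L.perm hn) = (Letter.s a : Letter n).base hn →
        ∃ b, twinSigma a * wval (L :: U) = wval (L :: U) * twinSigma b ∧
          ((Letter.s b : Letter n).base hn).image (g * wperm hn (L :: U)) =
            ((Letter.s a : Letter n).base hn).image g := by
      intro c hc1 hc2
      have hc3 : ((Letter.s c : Letter n).base hn).image (g * L.perm hn) =
          ((Letter.s a : Letter n).base hn).image g := by rw [image_mul, hc2]
      obtain ⟨b, hb1, hb2⟩ := ih (g * L.perm hn) c (by
        intro B hB
        rw [hc3]
        exact h B (by simp [labels, hB]))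
      refine ⟨b, ?_, ?_⟩
      · rw [wval_cons, mul_assoc, ← hb1, ← mul_assoc, ← mul_assoc]
        exact congrArg (· * wval U) hc1
      · rw [wperm_cons, ← mul_assoc, hb2, hc3]
    cases L with
    | s c =>
      have hfar := far_of_not_dep hn a c h1
      refine step a (twin_comm a c hfar) ?_
      refine (Finset.image_congr (g := id) ?_).trans Finset.image_id
      intro k hk
      apply perm_s_fix
      have hk' := (mem_base_s hn a k).1 hk
      rw [mem_base_s]
      omega
    | z =>
      have h2 := not_mem_of_not_dep hn a _ h1
      rw [mem_base_s] at h2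
      simp only [lst] at h2
      have := a.isLt
      exact step ⟨a + 1, by omega⟩ (twin_shift _ _ rfl) (base_z_shift hn _ _ rfl)
    | zi =>
      have h2 := not_mem_of_not_dep hn a _ h1
      rw [mem_base_s] at h2
      simp only [fst] at h2
      have := a.isLt
      have h3 : (a : ℕ) = (⟨a - 1, by omega⟩ : Fin (n - 1)) + 1 := by simp only; omega
      refine step ⟨a - 1, by omega⟩ ?_ (base_zi_shift hn _ _ h3)
      have := twin_shift _ _ h3
      simp only [Letter.val]
      rw [eq_inv_mul_iff_mul_eq, ← mul_assoc, ← this, mul_assoc, mul_inv_cancel, mul_one]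

/-- If all letters of `U` are independent of the complement of the first strand, then `U` is a word
in the `σ_i` fixing the first position, and its conjugate by `ζ` is a word of the same length. -/
theorem push_z (U : List (Letter n)) : ∀ (g : Equiv.Perm (Fin n)),
    (∀ B ∈ labels hn g U, ¬ Dep (Finset.univ.erase (g (fst hn))) B) →
    (g * wperm hn U) (fst hn) = g (fst hn) ∧
      ∃ U', U'.length = U.length ∧ wval U' * twinZeta = twinZeta * wval U := by
  induction U with
  | nil => intro g _; exact ⟨by simp [wperm], [], by simp [wval]⟩
  | cons L U ih =>
    intro g h
    have h1 := h ((L.base hn).image g) (by simp [labels])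
    rw [← image_erase, dep_image] at h1
    cases L with
    | s c =>
      have hmem := not_mem_of_not_dep hn c _ (fun h => h1 h.symm)
      have hfix := perm_s_fix hn c _ hmem
      rw [mem_base_s] at hmem
      simp only [fst] at hmem
      obtain ⟨e, U', hl, hU'⟩ := ih (g * (Letter.s c).perm hn) (by
        intro B hB
        rw [Equiv.Perm.mul_apply, hfix]
        exact h B (by simp [labels, hB]))
      refine ⟨?_, .s ⟨c - 1, by have := c.isLt; omega⟩ :: U', by simp [hl], ?_⟩
      · rw [wperm_cons, ← mul_assoc, e, Equiv.Perm.mul_apply, hfix]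
      · rw [wval_cons, wval_cons, mul_assoc, hU', ← mul_assoc, ← mul_assoc]
        exact congrArg (· * wval U) (twin_shift _ _ (by simp only; omega))
    | z => exact absurd (dep_erase hn _ _) h1
    | zi => exact absurd (dep_erase hn _ _) h1

/-- The mirror image of `push_z`, for the last strand and `ζ⁻¹`. -/
theorem push_zi (U : List (Letter n)) : ∀ (g : Equiv.Perm (Fin n)),
    (∀ B ∈ labels hn g U, ¬ Dep (Finset.univ.erase (g (lst hn))) B) →
    (g * wperm hn U) (lst hn) = g (lst hn) ∧
      ∃ U', U'.length = U.length ∧ twinZeta * wval U' = wval U * twinZeta := by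
  induction U with
  | nil => intro g _; exact ⟨by simp [wperm], [], by simp [wval]⟩
  | cons L U ih =>
    intro g h
    have h1 := h ((L.base hn).image g) (by simp [labels])
    rw [← image_erase, dep_image] at h1
    cases L with
    | s c =>
      have hmem := not_mem_of_not_dep hn c _ (fun h => h1 h.symm)
      have hfix := perm_s_fix hn c _ hmem
      rw [mem_base_s] at hmem
      simp only [lst] at hmem
      obtain ⟨e, U', hl, hU'⟩ := ih (g * (Letter.s c).perm hn) (by
        intro B hB
        rw [Equiv.Perm.mul_apply, hfix]
        exact h B (by simp [labels, hB]))
      refine ⟨?_, .s ⟨c + 1, by have := c.isLt; omega⟩ :: U', by simp [hl], ?_⟩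
      · rw [wperm_cons, ← mul_assoc, e, Equiv.Perm.mul_apply, hfix]
      · rw [wval_cons, wval_cons, mul_assoc, ← hU', ← mul_assoc, ← mul_assoc]
        exact congrArg (· * wval U') (twin_shift _ _ rfl).symm
    | z => exact absurd (dep_erase hn _ _) h1
    | zi => exact absurd (dep_erase hn _ _) h1

theorem fst_ne_lst : fst hn ≠ lst hn := by
  simp only [fst, lst, ne_eq, Fin.mk.injEq]
  omega

theorem perm_z_fst : (Letter.z : Letter n).perm hn (fst hn) = lst hn := by
  apply Fin.ext
  rw [perm_z_val]
  simp [fst, lst]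

theorem perm_zi_lst : (Letter.zi : Letter n).perm hn (lst hn) = fst hn := by
  apply Fin.ext
  rw [perm_zi_val]
  simp [fst, lst]

/-- Two letters with the same label, separated by letters with independent labels, cancel. -/
theorem cancel (g : Equiv.Perm (Fin n)) (L L' : Letter n) (U : List (Letter n))
    (he : (L'.base hn).image (g * L.perm hn * wperm hn U) = (L.base hn).image g)
    (h : ∀ B ∈ labels hn (g * L.perm hn) U, ¬ Dep ((L.base hn).image g) B) :
    ∃ U', U'.length = U.length ∧ wval U' = L.val * wval U * L'.val := by
  cases L with
  | s a =>
    have e : ((Letter.s a).base hn).image (g * (Letter.s a).perm hn) =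
        ((Letter.s a).base hn).image g := by
      rw [image_mul]
      exact congrArg _ (image_rev_self _ _)
    rw [← e] at he h
    obtain ⟨b, hb1, hb2⟩ := push_s hn U _ _ h
    cases L' with
    | s b' =>
      have := base_s_eq_iff hn b' b (Finset.image_injective (Equiv.injective _) (he.trans hb2.symm))
      subst this
      refine ⟨U, rfl, ?_⟩
      simp only [Letter.val]
      rw [hb1, mul_assoc, twin_sq, mul_one]
    | z => exact absurd he.symm (base_ne hn _ _ _ _)
    | zi => exact absurd he.symm (base_ne hn _ _ _ _)
  | z =>
    have e : (g * Letter.z.perm hn) (fst hn) = g (lst hn) := by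
      rw [Equiv.Perm.mul_apply, perm_z_fst]
    have e' : ((Letter.z).base hn).image g = Finset.univ.erase (g (lst hn)) := image_erase _ _
    rw [e', ← e] at h
    obtain ⟨h1, U', h2, h3⟩ := push_z hn U _ h
    cases L' with
    | s b => exact absurd he (base_ne hn _ _ _ _)
    | z =>
      have := erase_inj ((image_erase _ _).symm.trans (he.trans e'))
      rw [← e, ← h1] at this
      exact absurd (Equiv.injective _ this).symm (fst_ne_lst hn)
    | zi =>
      refine ⟨U', h2, ?_⟩
      simp only [Letter.val]
      rw [← h3, mul_inv_cancel_right]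
  | zi =>
    have e : (g * Letter.zi.perm hn) (lst hn) = g (fst hn) := by
      rw [Equiv.Perm.mul_apply, perm_zi_lst]
    have e' : ((Letter.zi).base hn).image g = Finset.univ.erase (g (fst hn)) := image_erase _ _
    rw [e', ← e] at h
    obtain ⟨h1, U', h2, h3⟩ := push_zi hn U _ h
    cases L' with
    | s b => exact absurd he (base_ne hn _ _ _ _)
    | z =>
      refine ⟨U', h2, ?_⟩
      simp only [Letter.val]
      rw [mul_assoc, ← h3, inv_mul_cancel_left]
    | zi =>
      have := erase_inj ((image_erase _ _).symm.trans (he.trans e'))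
      rw [← e, ← h1] at this
      exact absurd (Equiv.injective _ this) (fst_ne_lst hn)

theorem labels_ne_univ (W : List (Letter n)) : ∀ g, Finset.univ ∉ labels hn g W := by
  induction W with
  | nil => intro g; simp [labels]
  | cons L W ih =>
    intro g
    simp only [labels, List.mem_cons, not_or]
    refine ⟨fun h => ?_, ih _⟩
    have := congrArg Finset.card h
    rw [Finset.card_image_of_injective _ g.injective, Finset.card_univ, Fintype.card_fin] at this
    cases L with
    | s i => rw [card_base_s] at this; omega
    | z =>
      simp only [Letter.base] at this
      rw [Finset.card_erase_of_mem (Finset.mem_univ _), Finset.card_univ, Fintype.card_fin] at this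
      omega
    | zi =>
      simp only [Letter.base] at this
      rw [Finset.card_erase_of_mem (Finset.mem_univ _), Finset.card_univ, Fintype.card_fin] at this
      omega

theorem image_z : (Finset.Icc (snd hn) (lst hn)).image (rev (fst hn) (lst hn)) =
    Finset.univ.erase (lst hn) := by
  apply image_rev_of
  intro i
  have := i.isLt
  simp only [Finset.mem_Icc, Finset.mem_erase, Finset.mem_univ, and_true, ne_eq, Fin.ext_iff,
    Fin.le_def, rev_val, fst, snd, lst]
  split_ifs <;> omega

theorem Icc_snd : Finset.Icc (snd hn) (lst hn) = Finset.univ.erase (fst hn) := by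
  ext i
  have := i.isLt
  simp only [Finset.mem_Icc, Finset.mem_erase, Finset.mem_univ, and_true, ne_eq, Fin.ext_iff,
    Fin.le_def, fst, snd, lst]
  omega

theorem image_Icc_fst (g : Equiv.Perm (Fin n)) :
    (Finset.Icc (fst hn) (lst hn)).image g = Finset.univ := by
  have : Finset.Icc (fst hn) (lst hn) = Finset.univ := by
    ext i
    have := i.isLt
    simp only [Finset.mem_Icc, Finset.mem_univ, iff_true, Fin.le_def, fst, lst]
    omega
  rw [this, Finset.image_univ_equiv]

theorem lo_lt_hi (i : Fin (n - 1)) : lo i < hi i := Nat.lt_succ_self _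

theorem fst_lt_lst : fst hn < lst hn := by
  exact Nat.lt_sub_of_add_lt (snd_lt hn)

theorem snd_lt_lst : snd hn < lst hn := by
  exact Nat.lt_sub_of_add_lt (lt_of_lt_of_le (show 1 + 1 < 4 by decide) hn)

/-- The index of the generator `s_{p,q}` of the cactus group. -/
def mkGen {n : ℕ} (p q : Fin n) (h : p < q) : CactusGen n := ⟨(p, q), h⟩

/-- Along a word, the cactus group acts on `(g, x)` by applying `τ` at the successive labels. -/
theorem act_word {X : Type} (τ : Finset (Fin n) → Equiv.Perm X) (hτ : ∀ A, τ A * τ A = 1)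
    (hc : ∀ A B, ¬ Dep A B → τ A * τ B = τ B * τ A) (hu : τ Finset.univ = 1)
    (κ : RoundTwinGroup n →* CactusGroup n)
    (hσ : ∀ i : Fin (n - 1), κ (twinSigma i) =
      cactusGen (mkGen _ _ (lo_lt_hi i)))
    (hζ : κ twinZeta = cactusGen (mkGen _ _ (fst_lt_lst hn)) *
      cactusGen (mkGen _ _ (snd_lt_lst hn)))
    (W : List (Letter n)) : ∀ (g : Equiv.Perm (Fin n)) (x : X),
    (cactusAct τ hτ hc (κ (wval W))).unop (g, x) =
      (g * wperm hn W, (labels hn g W).foldl (fun S a => τ a S) x) := by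
  have hgen : ∀ (L : Letter n) g x, (cactusAct τ hτ hc (κ L.val)).unop (g, x) =
      (g * L.perm hn, τ ((L.base hn).image g) x) := by
    intro L g x
    cases L with
    | s i =>
      simp only [Letter.val]
      rw [hσ, cactusAct_gen]
      rfl
    | z =>
      simp only [Letter.val]
      rw [hζ, map_mul, cactusAct_gen, cactusAct_gen]
      change genFun τ _ (genFun τ _ (g, x)) = _
      simp only [genFun, mkGen, image_mul, image_z, image_Icc_fst, hu, mul_assoc]
      rfl
    | zi =>
      have hinv : ∀ a : CactusGen n, (cactusGen a : CactusGroup n)⁻¹ = cactusGen a := fun a =>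
        inv_eq_of_mul_eq_one_left
          (PresentedGroup.one_of_mem (rels := cactusRels n) (Or.inl ⟨a, rfl⟩))
      simp only [Letter.val]
      rw [map_inv, hζ, mul_inv_rev, hinv, hinv, map_mul, cactusAct_gen, cactusAct_gen]
      change genFun τ _ (genFun τ _ (g, x)) = _
      simp only [genFun, mkGen, image_Icc_fst, hu, mul_assoc, Icc_snd]
      rfl
  induction W with
  | nil => intro g x; simp [wval, wperm, labels]
  | cons L W ih =>
    intro g x
    rw [wval_cons, map_mul, map_mul, MulOpposite.unop_mul, Equiv.Perm.mul_apply, hgen, ih,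
      wperm_cons, mul_assoc]
    rfl

end Words

/-! ### Injectivity -/

/-- For every `n ≥ 4`, the group homomorphism `κ : Υₙ → Jₙ` determined by
`κ(σᵢ) = s_{i,i+1}` for `1 ≤ i ≤ n-1` and `κ(ζ) = s_{1,n} · s_{2,n}` is injective. -/
theorem kappa_injective (n : ℕ) (hn : 4 ≤ n)
    (κ : RoundTwinGroup n →* CactusGroup n)
    (hσ : ∀ i : Fin (n - 1),
      κ (twinSigma i) = cactusGen ⟨(⟨(i : ℕ), by have := i.isLt; omega⟩,
        ⟨(i : ℕ) + 1, by have := i.isLt; omega⟩), Fin.mk_lt_mk.mpr (Nat.lt_succ_self _)⟩)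
    (hζ : κ twinZeta =
      cactusGen ⟨(⟨0, by omega⟩, ⟨n - 1, by omega⟩), Fin.mk_lt_mk.mpr (by omega)⟩ *
      cactusGen ⟨(⟨1, by omega⟩, ⟨n - 1, by omega⟩), Fin.mk_lt_mk.mpr (by omega)⟩) :
    Function.Injective κ := by
  have main : ∀ (N : ℕ) (W : List (Letter n)), W.length = N → κ (wval W) = 1 → wval W = 1 := by
    intro N
    induction N using Nat.strong_induction_on with
    | _ N ih =>
    intro W hN hW
    by_cases hW0 : W = []
    · subst hW0; simp [wval]
    have hl : labels hn 1 W ≠ [] := by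
      cases W with
      | nil => exact absurd rfl hW0
      | cons L W => simp [labels]
    by_cases H : ∀ P a U Q, labels hn 1 W = P ++ a :: (U ++ a :: Q) → ∃ b ∈ U, Dep a b
    · obtain ⟨X, τ, x₀, hτ, hc, hu, hx⟩ :=
        exists_action Dep Dep.refl (fun _ _ => Dep.symm) _ hl H
      have h := act_word hn τ hτ hc (hu _ (labels_ne_univ hn W 1)) κ hσ hζ W 1 x₀
      rw [hW, map_one] at h
      exact absurd (congrArg Prod.snd h).symm hx
    · push Not at H
      obtain ⟨P, a, U, Q, hs, hU⟩ := H
      obtain ⟨W₁, W₂, rfl, -, h2⟩ := labels_split hn _ _ _ _ hs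
      obtain ⟨L, W₃, rfl, rfl, h3⟩ := labels_split_cons hn _ _ _ _ h2
      obtain ⟨V, W₄, rfl, rfl, h4⟩ := labels_split hn _ _ _ _ h3
      obtain ⟨L', W₅, rfl, h5, -⟩ := labels_split_cons hn _ _ _ _ h4
      obtain ⟨V', hV1, hV2⟩ := cancel hn _ L L' V h5 hU
      have he : wval (W₁ ++ L :: (V ++ L' :: W₅)) = wval (W₁ ++ (V' ++ W₅)) := by
        simp only [wval_append, wval_cons, hV2, mul_assoc]
      rw [he] at hW ⊢
      refine ih _ ?_ _ rfl hW
      rw [← hN]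
      simp only [List.length_append, List.length_cons]
      omega
  rw [injective_iff_map_eq_one]
  intro y hy
  obtain ⟨W, rfl⟩ := exists_word y
  exact main _ W rfl hy
end

section
/- For every n ≥ 1, the space Q_n is aspherical: for every k ≥ 2, the homotopy group π_k(Q_n, q₀) is trivial; hence Q_n is an Eilenberg–MacLane space K(Π_n, 1). -/
/-!
The space `Q_{n+1}` is aspherical because spheroids in it lift to a covering in which every compact
connected set through the basepoint lies in an absolute extensor.

Lifting angles, a spheroid of dimension `k ≥ 2` in `QSet n` becomes a spheroid in `XSet (n + 1)`, the
part of `ℝⁿ⁺¹` where only commuting hyperplanes of the periodic arrangement `x j - x i = m` meet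
(`exists_real_lift`). Commuting means having no index in common, so that exactly the triple coincidences
modulo `1` are excluded. Rotating the last point to
`1` gives a map `push` back to `QSet n`.

Each hyperplane gives a generator of a right-angled Coxeter group, two generators commuting when the
hyperplanes do. Recording the hyperplanes crossed by a path defines a covering `Cover` of the
arrangement space, because around a point of `XSet n` only commuting hyperplanes are met. The group
enters only through its orbit in the dual of the geometric representation: labels are functions
`v : Hyp n → ℤ`, and a generator `s` shortens the element recorded by `v` exactly when `v s < 0`
(`Reach.desc`). The covering is tiled by copies `Piece v σ` of closed chambers, and the descents of a
piece are pairwise commuting walls of its chamber (`Reach.comm_of_neg`, `Reach.desc`).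

A closed chamber, like any nonempty face of it, is a closed convex set less some points of its relative
boundary, and this is an absolute extensor (`isAE_face`). Pairwise commuting walls of a chamber have
a common point, by moving coordinates one at a time (`Face.finset`), so a union of such faces is an
absolute extensor as well (`isAE_faces`). If the pieces of a finite descent-closed set are added in
order of length, each new one meets the union of the earlier ones exactly in the faces cut out by its
descents, and the gluing lemma `IsAE.union` shows that the union is an absolute extensor
(`St.isAE_closed`). The pieces reached from the base chamber are locally finite and fill a clopen set,
so the image of a lifted spheroid lies in such a finite union (`St.exists_isAE`). There the spheroid
contracts relative to the boundary of the cube, and the contraction is pushed down to `QSet n`.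
-/

open scoped Real

noncomputable section

section

open Set Topology

/-! ### Absolute extensors -/

/-- `K` is an absolute extensor for metric spaces: a continuous map from a closed subset of a metric
space to `K` extends to the whole space. Maps are encoded as total functions into the ambient space
`E`. In particular `K` is nonempty. -/
def IsAE {E : Type*} [TopologicalSpace E] (K : Set E) : Prop :=
  ∀ (Y : Type) [MetricSpace Y] (C : Set Y) (f : Y → E), IsClosed C → ContinuousOn f C →
    MapsTo f C K → ∃ g : Y → E, Continuous g ∧ (∀ y, g y ∈ K) ∧ EqOn g f C

/-- The union of two closed absolute extensors with absolute extensor intersection is an absolute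
extensor. With `CA`, `CB` the parts of `C` mapped to `A` and to `B`, the space `Y` is divided into
the points `YA` closer to `CA` and the points `YB` closer to `CB`; the map is extended first over
the interface `YA ∩ YB` into `A ∩ B`, then over each half. -/
theorem IsAE.union {E : Type*} [TopologicalSpace E] {A B : Set E} (hA : IsAE A) (hB : IsAE B)
    (hAB : IsAE (A ∩ B)) (cA : IsClosed A) (cB : IsClosed B) : IsAE (A ∪ B) := by
  classical
  intro Y _ C f hC hf hm
  set CA := C ∩ f ⁻¹' A
  set CB := C ∩ f ⁻¹' B
  have hCA : IsClosed CA := hf.preimage_isClosed_of_isClosed hC cA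
  have hCB : IsClosed CB := hf.preimage_isClosed_of_isClosed hC cB
  set YA := {y : Y | Metric.infEDist y CA ≤ Metric.infEDist y CB}
  set YB := {y : Y | Metric.infEDist y CB ≤ Metric.infEDist y CA}
  have hYA : IsClosed YA := isClosed_le Metric.continuous_infEDist Metric.continuous_infEDist
  have hYB : IsClosed YB := isClosed_le Metric.continuous_infEDist Metric.continuous_infEDist
  have hYAB : ∀ y, y ∈ YA ∨ y ∈ YB := fun y =>
    le_total (Metric.infEDist y CA) (Metric.infEDist y CB)
  have cover : ∀ y ∈ C, y ∈ CA ∨ y ∈ CB := fun y hy => (hm hy).imp (⟨hy, ·⟩) (⟨hy, ·⟩)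
  have zero : ∀ {S : Set Y} {y}, IsClosed S → (y ∈ S ↔ Metric.infEDist y S = 0) := by
    intro S y hS
    rw [← Metric.mem_closure_iff_infEDist_zero, hS.closure_eq]
  have keyA : ∀ y ∈ C, y ∈ YA → y ∈ CA := by
    intro y hy h
    rcases cover y hy with h' | h'
    · exact h'
    · rw [zero hCB] at h'
      rw [zero hCA]
      exact le_antisymm (h' ▸ h) bot_le
  have keyB : ∀ y ∈ C, y ∈ YB → y ∈ CB := by
    intro y hy h
    rcases cover y hy with h' | h'
    · rw [zero hCA] at h'
      rw [zero hCB]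
      exact le_antisymm (h' ▸ h) bot_le
    · exact h'
  obtain ⟨g, hg, gm, ge⟩ := hAB Y (CA ∩ CB) f (hCA.inter hCB)
    (hf.mono fun y hy => hy.1.1) (fun y hy => ⟨hy.1.2, hy.2.2⟩)
  have ext : ∀ {D K : Set E} {CD : Set Y}, IsAE K → IsClosed CD → CD ⊆ C → MapsTo f CD K →
      A ∩ B ⊆ K → (∀ y ∈ CD, y ∈ YA → y ∈ YB → y ∈ CA ∩ CB) →
      ∃ h : Y → E, Continuous h ∧ (∀ y, h y ∈ K) ∧ EqOn h f CD ∧ EqOn h g (YA ∩ YB) := by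
    intro D K CD hK hCD hsub hmaps hABK hover
    let u : Y → E := fun y => if y ∈ CD then f y else g y
    have u1 : EqOn u f CD := fun y hy => if_pos hy
    have u2 : EqOn u g (YA ∩ YB) := by
      intro y hy
      by_cases h : y ∈ CD
      · rw [u1 h]; exact (ge (hover y h hy.1 hy.2)).symm
      · exact if_neg h
    obtain ⟨h, hc, hm', he⟩ := hK Y (CD ∪ (YA ∩ YB)) u (hCD.union (hYA.inter hYB))
      (((hf.mono hsub).congr u1).union_of_isClosed (hg.continuousOn.congr u2) hCD
        (hYA.inter hYB)) (by
        rintro y (hy | hy)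
        · rw [u1 hy]; exact hmaps hy
        · rw [u2 hy]; exact hABK (gm y))
    exact ⟨h, hc, hm', fun y hy => (he (.inl hy)).trans (u1 hy),
      fun y hy => (he (.inr hy)).trans (u2 hy)⟩
  obtain ⟨gA, cgA, mgA, egA, egA'⟩ := ext (D := A) hA hCA inter_subset_left (fun y hy => hy.2)
    inter_subset_left (fun y hy _ h2 => ⟨hy, keyB y hy.1 h2⟩)
  obtain ⟨gB, cgB, mgB, egB, egB'⟩ := ext (D := B) hB hCB inter_subset_left (fun y hy => hy.2)
    inter_subset_right (fun y hy h1 _ => ⟨keyA y hy.1 h1, hy⟩)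
  let w : Y → E := fun y => if y ∈ YA then gA y else gB y
  have w1 : EqOn w gA YA := fun y hy => if_pos hy
  have w2 : EqOn w gB YB := by
    intro y hy
    by_cases h : y ∈ YA
    · rw [w1 h, egA' ⟨h, hy⟩, egB' ⟨h, hy⟩]
    · exact if_neg h
  refine ⟨w, ?_, ?_, ?_⟩
  · rw [← continuousOn_univ, ← (eq_univ_of_forall hYAB : YA ∪ YB = univ)]
    exact (cgA.continuousOn.congr w1).union_of_isClosed (cgB.continuousOn.congr w2) hYA hYB
  · intro y
    rcases hYAB y with h | h
    · rw [w1 h]; exact .inl (mgA y)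
    · rw [w2 h]; exact .inr (mgB y)
  · intro y hy
    rcases hYAB y with h | h
    · rw [w1 h]; exact egA (keyA y hy h)
    · rw [w2 h]; exact egB (keyB y hy h)

/-- The nearest-point projection for the Euclidean norm retracts `ℝⁿ` onto a nonempty closed convex
set. -/
theorem exists_convex_retraction {n : ℕ} {K : Set (Fin n → ℝ)} (hne : K.Nonempty)
    (hc : IsClosed K) (hK : Convex ℝ K) :
    ∃ r : (Fin n → ℝ) → (Fin n → ℝ), Continuous r ∧ (∀ x, r x ∈ K) ∧ ∀ x ∈ K, r x = x := by
  let L := EuclideanSpace.equiv (Fin n) ℝ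
  let K' : Set (EuclideanSpace ℝ (Fin n)) := L ⁻¹' K
  have hK' : Convex ℝ K' := hK.linear_preimage L.toLinearEquiv.toLinearMap
  have hc' : IsClosed K' := hc.preimage L.continuous
  have hne' : K'.Nonempty := by
    obtain ⟨x, hx⟩ := hne
    exact ⟨L.symm x, by simpa [K'] using hx⟩
  choose P hP hPm using fun u => exists_norm_eq_iInf_of_complete_convex hne' hc'.isComplete hK' u
  have key : ∀ u, ∀ w ∈ K', inner ℝ (u - P u) (w - P u) ≤ 0 := fun u =>
    (norm_eq_iInf_iff_real_inner_le_zero hK' (hP u)).1 (hPm u)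
  have lip : LipschitzWith 1 P := by
    refine LipschitzWith.of_dist_le_mul fun u w => ?_
    rw [NNReal.coe_one, one_mul, dist_eq_norm, dist_eq_norm]
    have h1 := key u (P w) (hP w)
    have h2 := key w (P u) (hP u)
    have h3 : ‖P u - P w‖ * ‖P u - P w‖ ≤ inner ℝ (u - w) (P u - P w) := by
      rw [← real_inner_self_eq_norm_mul_norm]
      have e : inner ℝ (u - w) (P u - P w) - inner ℝ (P u - P w) (P u - P w)
          = - inner ℝ (u - P u) (P w - P u) - inner ℝ (w - P w) (P u - P w) := by
        simp only [inner_sub_left, inner_sub_right]; ring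
      linarith
    have h4 := h3.trans (real_inner_le_norm (u - w) (P u - P w))
    by_contra hlt
    push Not at hlt
    nlinarith [norm_nonneg (u - w), norm_nonneg (P u - P w)]
  refine ⟨fun x => L (P (L.symm x)), by
    exact L.continuous.comp (lip.continuous.comp L.symm.continuous), fun x => hP _, ?_⟩
  intro x hx
  have hx' : L.symm x ∈ K' := by simpa [K'] using hx
  have h := key (L.symm x) _ hx'
  have : L.symm x - P (L.symm x) = 0 := by
    rw [← inner_self_eq_zero (𝕜 := ℝ)]
    exact le_antisymm h real_inner_self_nonneg
  show L (P (L.symm x)) = x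
  rw [← sub_eq_zero.1 this]; simp

/-! ### Lifting spheroids -/

theorem isPreconnected_cube_boundary {k : ℕ} (hk : 2 ≤ k) :
    IsPreconnected (Cube.boundary (Fin k)) := by
  have face : ∀ (i : Fin k) (ε : unitInterval),
      IsPreconnected {y : Fin k → unitInterval | y i = ε} := by
    intro i ε
    have : {y : Fin k → unitInterval | y i = ε} =
        range fun y : Fin k → unitInterval => Function.update y i ε := by
      ext y
      constructor
      · intro h; exact ⟨y, by rw [← (h : y i = ε)]; simp⟩
      · rintro ⟨z, rfl⟩; simp
    rw [this]
    exact isPreconnected_range (continuous_id.update i continuous_const)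
  refine isPreconnected_of_forall (fun _ => 0) ?_
  rintro y ⟨i, hi⟩
  have : Nontrivial (Fin k) := Fin.nontrivial_iff_two_le.2 hk
  obtain ⟨j, hj⟩ := exists_ne i
  refine ⟨{z | z i = y i} ∪ {z | z j = 0}, ?_, .inr rfl, .inl rfl,
    (face i (y i)).union (Function.update (fun _ => 0) i (y i)) (by simp) (by simp [hj]) (face j 0)⟩
  rintro z (hz | hz)
  · exact ⟨i, by rw [(hz : z i = y i)]; exact hi⟩
  · exact ⟨j, .inl hz⟩

/-- A spheroid of dimension at least two lifts along a covering map to a spheroid, since the boundary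
of the cube is connected. -/
theorem exists_lift_genLoop {B E : Type*} [TopologicalSpace B] [TopologicalSpace E] {p : E → B}
    (hp : IsCoveringMap p) {k : ℕ} (hk : 2 ≤ k) {b : B} (f : C(Fin k → unitInterval, B))
    (hf : ∀ y ∈ Cube.boundary (Fin k), f y = b) (e : E) (he : p e = b) :
    ∃ F : C(Fin k → unitInterval, E), (∀ y ∈ Cube.boundary (Fin k), F y = e) ∧
      ∀ y, p (F y) = f y := by
  have h0 : (fun _ => 0 : Fin k → unitInterval) ∈ Cube.boundary (Fin k) :=
    ⟨⟨0, by omega⟩, .inl rfl⟩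
  -- The cube is a retract of `ℝᵏ`, which is contractible and locally path connected.
  let ρ : C(Fin k → ℝ, Fin k → unitInterval) :=
    ⟨fun x i => projIcc 0 1 zero_le_one (x i), by fun_prop⟩
  let ι : C(Fin k → unitInterval, Fin k → ℝ) := ⟨fun y i => y i, by fun_prop⟩
  have hρι : ∀ y, ρ (ι y) = y := fun y => by ext i; simp [ρ, ι]
  obtain ⟨G, ⟨h1, h2⟩, -⟩ := hp.existsUnique_continuousMap_lifts (f.comp ρ) (ι fun _ => 0) e
    (by rw [he, ContinuousMap.comp_apply, hρι, hf _ h0])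
  have h2' : ∀ y, p (G.comp ι y) = f y := fun y => by
    have := congrFun h2 (ι y)
    simpa [hρι] using this
  refine ⟨G.comp ι, fun y hy => ?_, h2'⟩
  rw [← h1, ← ContinuousMap.comp_apply]
  exact hp.constOn_of_comp (isPreconnected_cube_boundary hk) (G.comp ι).continuous.continuousOn
    (fun a ha a' ha' => by rw [h2', h2', hf a ha, hf a' ha']) hy h0

/-! ### Hyperplanes, chambers and walls -/

/-- The hyperplane `x j - x i = m` in `ℝⁿ`, where `i < j` and `m` is an integer. -/
@[ext] structure Hyp (n : ℕ) where
  i : Fin n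
  j : Fin n
  lt : i < j
  m : ℤ

namespace Hyp
variable {n : ℕ}

/-- The affine function whose zero set is the hyperplane. -/
def f (s : Hyp n) (x : Fin n → ℝ) : ℝ := x s.j - x s.i - s.m

/-- Two hyperplanes commute when they have no index in common; a configuration may then lie on both
without a triple coincidence. -/
def Comm (s t : Hyp n) : Prop := s.i ≠ t.i ∧ s.i ≠ t.j ∧ s.j ≠ t.i ∧ s.j ≠ t.j

theorem Comm.symm {s t : Hyp n} (h : s.Comm t) : t.Comm s :=
  ⟨h.1.symm, h.2.2.1.symm, h.2.1.symm, h.2.2.2.symm⟩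

theorem not_comm_self (s : Hyp n) : ¬ s.Comm s := fun h => h.1 rfl

theorem Comm.ne {s t : Hyp n} (h : s.Comm t) : s ≠ t := by
  rintro rfl; exact not_comm_self _ h

theorem continuous_f (s : Hyp n) : Continuous s.f := by unfold f; fun_prop

theorem f_combo (s : Hyp n) (x y : Fin n → ℝ) (a b : ℝ) (h : a + b = 1) :
    s.f (a • x + b • y) = a * s.f x + b * s.f y := by
  have : b = 1 - a := by linarith
  subst this
  simp only [f, Pi.add_apply, Pi.smul_apply, smul_eq_mul]; ring

end Hyp

open Hyp

variable {n : ℕ}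

/-- Two nonzero reals of the same sign. -/
def SameSign (a b : ℝ) : Prop := a ≠ 0 ∧ b ≠ 0 ∧ (0 < a ↔ 0 < b)

theorem SameSign.neg {a b : ℝ} (h : SameSign a b) : SameSign (-a) (-b) := by
  obtain ⟨h1, h2, h3⟩ := h
  refine ⟨neg_ne_zero.2 h1, neg_ne_zero.2 h2, ?_⟩
  rcases lt_or_gt_of_ne h1 with h | h <;> rcases lt_or_gt_of_ne h2 with h' | h' <;>
    constructor <;> intro <;> first | linarith | (have := h3.1 (by linarith); linarith) |
      (have := h3.2 (by linarith); linarith)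

/-- `y` and `p` are strictly on the same side of every hyperplane other than `s` that does not commute
with `s`. The hyperplanes are listed by differences of coordinates, without regard to the order of
the two indices; see `compat_iff`. -/
def Compat (s : Hyp n) (y p : Fin n → ℝ) : Prop :=
  (∀ k, k ≠ s.i → k ≠ s.j → ∀ c : ℤ, SameSign (y k - y s.i - c) (p k - p s.i - c) ∧
    SameSign (y k - y s.j - c) (p k - p s.j - c)) ∧
  ∀ c : ℤ, c ≠ s.m → SameSign (y s.j - y s.i - c) (p s.j - p s.i - c)

theorem compat_iff {s : Hyp n} {y p : Fin n → ℝ} :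
    Compat s y p ↔ ∀ t, t ≠ s → ¬ s.Comm t → SameSign (t.f y) (t.f p) := by
  constructor
  · rintro ⟨h1, h2⟩ ⟨a, b, hab, c⟩ hne hc
    have e : ∀ z : Fin n → ℝ, z b - z a - (c : ℝ) = -(z a - z b - ((-c : ℤ) : ℝ)) := by
      intro z; push_cast; ring
    simp only [Hyp.f]
    have hlt := s.lt
    by_cases hai : a = s.i
    · subst hai
      by_cases hbj : b = s.j
      · subst hbj
        exact h2 c fun h => hne (by ext <;> simp [h])
      · exact (h1 b hab.ne' hbj c).1
    · by_cases haj : a = s.j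
      · subst haj
        exact (h1 b (by rintro rfl; exact lt_asymm hlt hab) hab.ne' c).2
      · rw [e, e]
        by_cases hbi : b = s.i
        · subst hbi; exact (h1 a hai haj _).1.neg
        · have hbj : b = s.j := by
            by_contra hbj
            exact hc ⟨Ne.symm hai, Ne.symm hbi, Ne.symm haj, Ne.symm hbj⟩
          subst hbj; exact (h1 a hai haj _).2.neg
  · intro h
    have gen : ∀ a k : Fin n, (a = s.i ∨ a = s.j) → k ≠ s.i → k ≠ s.j → ∀ c : ℤ,
        SameSign (y k - y a - c) (p k - p a - c) := by
      intro a k ha hki hkj c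
      have hka : k ≠ a := by rintro rfl; tauto
      rcases lt_or_gt_of_ne hka with hlt | hlt
      · have e : ∀ z : Fin n → ℝ, z k - z a - (c : ℝ) = -(z a - z k - ((-c : ℤ) : ℝ)) := by
          intro z; push_cast; ring
        rw [e, e]
        refine (h ⟨k, a, hlt, -c⟩ ?_ ?_).neg
        · intro h; exact hki (congrArg Hyp.i h)
        · rintro ⟨h1, h2, h3, h4⟩; rcases ha with rfl | rfl
          · exact h2 rfl
          · exact h4 rfl
      · refine h ⟨a, k, hlt, c⟩ ?_ ?_
        · intro h; exact hkj (congrArg Hyp.j h)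
        · rintro ⟨h1, h2, h3, h4⟩; rcases ha with rfl | rfl
          · exact h1 rfl
          · exact h3 rfl
    refine ⟨fun k hi hj c => ⟨gen _ k (.inl rfl) hi hj c, gen _ k (.inr rfl) hi hj c⟩, ?_⟩
    intro c hc
    exact h ⟨s.i, s.j, s.lt, c⟩ (fun h => hc (congrArg Hyp.m h)) fun h => h.1 rfl

/-- A set `σ` of hyperplanes, thought of as those having a chamber on their positive side, has a point
in the relative interior of its face cut out by `T`. So `Face σ ∅` says that `σ` is the sign vector
of a chamber. -/
def Face (σ : Set (Hyp n)) (T : Set (Hyp n)) : Prop :=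
  ∃ p : Fin n → ℝ, (∀ s ∈ T, s.f p = 0) ∧ ∀ s, s ∉ T → s.f p ≠ 0 ∧ (s ∈ σ ↔ 0 < s.f p)

/-- There is a point on `s` at which all hyperplanes not commuting with `s` have the signs given by
`σ`. For the sign vector of a chamber this says that `s` is one of its walls. -/
def Wall (σ : Set (Hyp n)) (s : Hyp n) : Prop :=
  ∃ p : Fin n → ℝ, s.f p = 0 ∧ ∀ t, t ≠ s → ¬ s.Comm t → t.f p ≠ 0 ∧ (t ∈ σ ↔ 0 < t.f p)

theorem Wall.symmDiff {σ : Set (Hyp n)} {s r : Hyp n} (h : Wall σ s) (hr : r = s ∨ s.Comm r) :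
    Wall (symmDiff σ {r}) s := by
  obtain ⟨p, hp, h⟩ := h
  refine ⟨p, hp, fun t ht hc => ?_⟩
  have htr : t ≠ r := by rintro rfl; tauto
  simpa [Set.mem_symmDiff, htr] using h t ht hc

/-- A point of a face in hyperplanes commuting with `s` is compatible with a witness that `s` is a
wall. -/
theorem Wall.aux {σ : Set (Hyp n)} {s : Hyp n} {q p : Fin n → ℝ} {T : Set (Hyp n)}
    (hT : ∀ t ∈ T, s.Comm t)
    (hp : ∀ t, t ≠ s → ¬ s.Comm t → t.f p ≠ 0 ∧ (t ∈ σ ↔ 0 < t.f p))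
    (hq : ∀ s, s ∉ T → s.f q ≠ 0 ∧ (s ∈ σ ↔ 0 < s.f q)) : Compat s q p :=
  compat_iff.2 fun t ht hc => by
    have h1 := hp t ht hc
    have h2 := hq t fun h => hc (hT t h)
    exact ⟨h2.1, h1.1, h2.2.symm.trans h1.2⟩

/-- If the face cut out by `T` is nonempty, so is its intersection with a wall `s` commuting with `T`:
the coordinate `s.j` is moved so that the point comes to lie on `s`. -/
theorem Face.insert {σ : Set (Hyp n)} {s : Hyp n} {T : Set (Hyp n)} (hF : Face σ T)
    (hW : Wall σ s) (hT : ∀ t ∈ T, s.Comm t) : Face σ (insert s T) := by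
  obtain ⟨p, hp0, hp⟩ := hW
  obtain ⟨q, hq0, hq⟩ := hF
  have hC := Wall.aux hT hp hq
  have hij : s.i ≠ s.j := s.lt.ne
  let q' := Function.update q s.j (q s.i + s.m)
  have qj : q' s.j = q s.i + s.m := by simp [q']
  have qk : ∀ k, k ≠ s.j → q' k = q k := fun k hk => by simp [q', hk]
  have hpj : p s.j = p s.i + s.m := by unfold Hyp.f at hp0; linarith
  have hcomm : ∀ t, s.Comm t → t.f q' = t.f q := fun t ht => by
    unfold Hyp.f; rw [qk _ ht.2.2.2.symm, qk _ ht.2.2.1.symm]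
  have hC' : Compat s q' p := by
    refine ⟨fun k hi hj c => ?_, fun c hc => ?_⟩
    · rw [qk k hj, qk _ hij, qj]
      refine ⟨(hC.1 k hi hj c).1, ?_⟩
      have := (hC.1 k hi hj (c + s.m)).1
      rw [hpj]
      push_cast at this
      convert this using 1 <;> ring
    · rw [qk _ hij, qj, hpj]
      have : (s.m : ℝ) - c ≠ 0 := by rw [sub_ne_zero]; exact_mod_cast hc.symm
      have e : ∀ a : ℝ, a + s.m - a - c = s.m - c := fun a => by ring
      rw [e, e]; exact ⟨this, this, Iff.rfl⟩
  rw [compat_iff] at hC'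
  refine ⟨q', ?_, ?_⟩
  · rintro t (rfl | ht)
    · unfold Hyp.f; rw [qj, qk _ hij]; ring
    · rw [hcomm t (hT t ht), hq0 t ht]
  · intro t ht
    simp only [mem_insert_iff, not_or] at ht
    by_cases hc : s.Comm t
    · rw [hcomm t hc]; exact hq t ht.2
    · have := hC' t ht.1 hc
      exact ⟨this.1, (hp t ht.1 hc).2.trans this.2.2.symm⟩

/-- Across a wall of a chamber there is a chamber whose sign vector differs in that wall only: reflect
a point of the first chamber in the wall. -/
theorem Face.reflect {σ : Set (Hyp n)} {s : Hyp n} (hF : Face σ ∅)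
    (hW : Wall σ s) : Face (symmDiff σ {s}) ∅ := by
  obtain ⟨p, hp0, hp⟩ := hW
  obtain ⟨q, -, hq⟩ := hF
  have hC := Wall.aux (T := ∅) (by simp) hp hq
  have hij : s.i ≠ s.j := s.lt.ne
  let q' := Function.update (Function.update q s.i (q s.j - s.m)) s.j (q s.i + s.m)
  have qj : q' s.j = q s.i + s.m := by simp [q']
  have qi : q' s.i = q s.j - s.m := by simp [q', hij]
  have qk : ∀ k, k ≠ s.i → k ≠ s.j → q' k = q k := fun k hi hk => by simp [q', hi, hk]
  have hpj : p s.j = p s.i + s.m := by unfold Hyp.f at hp0; linarith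
  have hcomm : ∀ t, s.Comm t → t.f q' = t.f q := fun t ht => by
    unfold Hyp.f; rw [qk _ ht.2.1.symm ht.2.2.2.symm, qk _ ht.1.symm ht.2.2.1.symm]
  have hC' : Compat s q' p := by
    refine ⟨fun k hi hj c => ?_, fun c hc => ?_⟩
    · rw [qk k hi hj, qi, qj]
      have h1 := (hC.1 k hi hj (c - s.m)).2
      have h2 := (hC.1 k hi hj (c + s.m)).1
      rw [hpj] at h1 ⊢
      push_cast at h1 h2
      constructor
      · convert h1 using 1 <;> ring
      · convert h2 using 1 <;> ring
    · rw [qi, qj, hpj]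
      have := (hC.2 (2 * s.m - c) (by intro h; apply hc; linarith)).neg
      rw [hpj] at this
      push_cast at this
      convert this using 1 <;> ring
  rw [compat_iff] at hC'
  refine ⟨q', by simp, ?_⟩
  intro t _
  by_cases hts : t = s
  · subst hts
    have h := hq t (by simp)
    have e : t.f q' = - t.f q := by unfold Hyp.f; rw [qi, qj]; ring
    rw [e]
    refine ⟨neg_ne_zero.2 h.1, ?_⟩
    simp only [Set.mem_symmDiff, mem_singleton_iff, not_true, and_false, true_and, false_or, h.2]
    constructor
    · intro h'; exact neg_pos.2 (lt_of_le_of_ne (not_lt.1 h') h.1)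
    · intro h'; linarith
  · have e : t ∈ symmDiff σ {s} ↔ t ∈ σ := by simp [Set.mem_symmDiff, hts]
    rw [e]
    by_cases hc : s.Comm t
    · rw [hcomm t hc]; exact hq t (by simp)
    · have := hC' t hts hc
      exact ⟨this.1, (hp t hts hc).2.trans this.2.2.symm⟩

/-- The hyperplanes in `N` commute pairwise. -/
def PC (N : Finset (Hyp n)) : Prop := ∀ s ∈ N, ∀ t ∈ N, s ≠ t → s.Comm t

theorem PC.mono {N N' : Finset (Hyp n)} (h : PC N) (hs : N' ⊆ N) : PC N' :=
  fun s hs' t ht => h s (hs hs') t (hs ht)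

/-- Pairwise commuting walls of a chamber meet in a common face of it. -/
theorem Face.finset {σ : Set (Hyp n)} (hF : Face σ ∅) (N : Finset (Hyp n)) (hN : PC N)
    (hW : ∀ s ∈ N, Wall σ s) : Face σ N := by
  classical
  induction N using Finset.induction_on with
  | empty => simpa using hF
  | insert s N hs ih =>
    rw [Finset.coe_insert]
    refine (ih (hN.mono (Finset.subset_insert _ _)) fun t ht => hW t (by simp [ht])).insert
      (hW s (by simp)) fun t ht => hN s (by simp) t (by simp [Finset.mem_coe.1 ht]) ?_
    rintro rfl; exact hs ht

/-! ### The right-angled Coxeter action on labels -/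

open Classical in
/-- The product of the pairwise commuting generators in `N` acting on `v`, in the dual of the geometric
representation of the right-angled Coxeter group with generators `Hyp n` and commutation relation
`Hyp.Comm`. A single generator `s` negates `v s`, adds `2 * v s` to `v t` for every `t ≠ s` not
commuting with `s`, and fixes the other coordinates. -/
def act (N : Finset (Hyp n)) (v : Hyp n → ℤ) : Hyp n → ℤ :=
  fun t => if t ∈ N then - v t else v t + 2 * ∑ s ∈ N, if s.Comm t then 0 else v s

theorem act_mem {N : Finset (Hyp n)} {v : Hyp n → ℤ} {t : Hyp n} (h : t ∈ N) :
    act N v t = - v t := if_pos h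

theorem act_of_comm {N : Finset (Hyp n)} {v : Hyp n → ℤ} {t : Hyp n} (h : ∀ s ∈ N, s.Comm t) :
    act N v t = v t := by
  classical
  have : t ∉ N := fun ht => not_comm_self t (h t ht)
  unfold act
  rw [if_neg this, Finset.sum_eq_zero (fun s hs => if_pos (h s hs))]; simp

open Classical in
theorem act_not_mem {N : Finset (Hyp n)} {v : Hyp n → ℤ} {t : Hyp n} (h : t ∉ N) :
    act N v t = v t + 2 * ∑ s ∈ N, if s.Comm t then 0 else v s := if_neg h

theorem act_single_of_not_comm {s t : Hyp n} {v : Hyp n → ℤ} (h : t ≠ s) (hc : ¬ s.Comm t) :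
    act {s} v t = v t + 2 * v s := by
  rw [act_not_mem (by simpa using h)]; simp [hc]

theorem act_single_of_comm {s t : Hyp n} {v : Hyp n → ℤ} (hc : s.Comm t) :
    act {s} v t = v t := act_of_comm (by simpa using hc)

@[simp] theorem act_empty (v : Hyp n → ℤ) : act ∅ v = v := by
  ext t; rw [act_of_comm (by simp)]

theorem act_act [DecidableEq (Hyp n)] {N N' : Finset (Hyp n)} (hd : Disjoint N N')
    (hN : PC (N ∪ N')) (v : Hyp n → ℤ) :
    act N (act N' v) = act (N ∪ N') v := by
  classical
  rw [Finset.disjoint_left] at hd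
  have c1 : ∀ s ∈ N, ∀ t ∈ N', s.Comm t := fun s hs t ht =>
    hN s (by simp [hs]) t (by simp [ht]) (by rintro rfl; exact hd hs ht)
  ext t
  by_cases h1 : t ∈ N
  · rw [act_mem h1, act_mem (N := N ∪ N') (by simp [h1]),
      act_of_comm fun s hs => (c1 t h1 s hs).symm]
  · by_cases h2 : t ∈ N'
    · rw [act_of_comm fun s hs => c1 s hs t h2, act_mem h2, act_mem (N := N ∪ N') (by simp [h2])]
    · rw [act_not_mem h1, act_not_mem h2, act_not_mem (N := N ∪ N') (by simp [h1, h2]),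
        Finset.sum_union (Finset.disjoint_left.2 hd)]
      have : ∀ s ∈ N, act N' v s = v s := fun s hs => act_of_comm fun r hr => (c1 s hs r hr).symm
      have e : (∑ s ∈ N, if s.Comm t then 0 else act N' v s) =
          ∑ s ∈ N, if s.Comm t then 0 else v s :=
        Finset.sum_congr rfl fun s hs => by rw [this s hs]
      rw [e]
      ring

theorem act_self (N : Finset (Hyp n)) (v : Hyp n → ℤ) : act N (act N v) = v := by
  classical
  ext t
  by_cases h1 : t ∈ N
  · rw [act_mem h1, act_mem h1, neg_neg]
  · have e : (∑ s ∈ N, if s.Comm t then 0 else act N v s) =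
        -∑ s ∈ N, if s.Comm t then 0 else v s := by
      rw [← Finset.sum_neg_distrib]
      exact Finset.sum_congr rfl fun s hs => by rw [act_mem hs]; split_ifs <;> simp
    rw [act_not_mem h1, e, act_not_mem h1]
    ring

theorem pc_single (s : Hyp n) : PC {s} := by
  intro a ha b hb hab; simp_all

theorem pc_pair {s r : Hyp n} [DecidableEq (Hyp n)] (h : s.Comm r) :
    PC ({s} ∪ {r} : Finset (Hyp n)) := by
  intro a ha b hb hab
  simp only [Finset.mem_union, Finset.mem_singleton] at ha hb
  rcases ha with rfl | rfl <;> rcases hb with rfl | rfl <;>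
    first | exact absurd rfl hab | exact h | exact h.symm

theorem act_comm {s r : Hyp n} (h : s.Comm r) (v : Hyp n → ℤ) :
    act {s} (act {r} v) = act {r} (act {s} v) := by
  classical
  rw [act_act (by simpa using h.ne) (pc_pair h), act_act (by simpa using h.ne.symm)
    (pc_pair h.symm), Finset.union_comm]

/-- Starting from the chamber `σ₀` with the constant label `1`, the chamber `σ` with label `v` is
reached by crossing `m` walls one after the other, each crossing of a wall `s` being ascending
(`0 < v s`). The label `v` stands for the element of the Coxeter group that records the walls
crossed, and `m` for its word length. -/
inductive Reach (σ₀ : Set (Hyp n)) : ℕ → (Hyp n → ℤ) → Set (Hyp n) → Prop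
  | base : Reach σ₀ 0 (fun _ => 1) σ₀
  | step {m v σ s} : Reach σ₀ m v σ → 0 < v s → Wall σ s →
      Reach σ₀ (m + 1) (act {s} v) (symmDiff σ {s})

namespace Reach
variable {σ₀ σ : Set (Hyp n)} {m : ℕ} {v : Hyp n → ℤ}

/-- For two hyperplanes that do not commute at most one coordinate is negative, and then it is the
smaller in absolute value. No coordinate vanishes. -/
theorem pos (h : Reach σ₀ m v σ) :
    (∀ s, v s ≠ 0) ∧ ∀ s t, s ≠ t → ¬ s.Comm t → 0 < v s + v t := by
  induction h with
  | base => simp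
  | @step m v σ r hR hr hW ih =>
    obtain ⟨h1, h2⟩ := ih
    have key : ∀ t, t ≠ r → ¬ r.Comm t → act {r} v t = v t + 2 * v r ∧ 0 < v r + v t :=
      fun t ht hc => ⟨act_single_of_not_comm ht hc, h2 r t ht.symm hc⟩
    have kr : act {r} v r = - v r := act_mem (by simp)
    refine ⟨fun t => ?_, fun s t hst hc => ?_⟩
    · by_cases ht : t = r
      · subst ht; rw [kr]; exact neg_ne_zero.2 (h1 t)
      · by_cases hc : r.Comm t
        · rw [act_single_of_comm hc]; exact h1 t
        · have := key t ht hc; omega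
    · by_cases hs : s = r
      · subst hs
        have := key t hst.symm hc; omega
      · by_cases ht : t = r
        · subst ht
          have := key s hst fun h => hc h.symm
          omega
        · have h3 := h2 s t hst hc
          by_cases hcs : r.Comm s <;> by_cases hct : r.Comm t
          · rw [act_single_of_comm hcs, act_single_of_comm hct]; exact h3
          · have := key t ht hct
            rw [act_single_of_comm hcs]; omega
          · have := key s hs hcs
            rw [act_single_of_comm hct]; omega
          · have := key s hs hcs
            have := key t ht hct
            omega

/-- Descents commute pairwise. -/
theorem comm_of_neg (h : Reach σ₀ m v σ) {s t : Hyp n} (hs : v s < 0) (ht : v t < 0)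
    (hst : s ≠ t) : s.Comm t := by
  by_contra hc
  have := h.pos.2 s t hst hc
  omega

/-- A negative coordinate `r` of the label is a descent: `r` is a wall of the chamber, and crossing it
leads to a state of smaller length. This is the exchange property of the right-angled group. -/
theorem desc (h : Reach σ₀ m v σ) {r : Hyp n} (hr : v r < 0) :
    Wall σ r ∧ ∃ m', m = m' + 1 ∧ Reach σ₀ m' (act {r} v) (symmDiff σ {r}) := by
  induction h with
  | base => simp at hr
  | @step m v σ s hR hs hW ih =>
    by_cases hrs : r = s
    · subst hrs
      refine ⟨hW.symmDiff (.inl rfl), m, rfl, ?_⟩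
      rwa [act_self, symmDiff_symmDiff_cancel_right]
    · by_cases hc : s.Comm r
      · rw [act_single_of_comm hc] at hr
        obtain ⟨hWr, m', rfl, hR'⟩ := ih hr
        refine ⟨hWr.symmDiff (.inr hc.symm), m' + 1, rfl, ?_⟩
        rw [act_comm hc.symm, symmDiff_right_comm]
        exact hR'.step (by rwa [act_single_of_comm hc.symm]) (hW.symmDiff (.inr hc))
      · have := hR.pos.2 s r (Ne.symm hrs) hc
        rw [act_single_of_not_comm hrs hc] at hr
        omega

theorem face (h : Reach σ₀ m v σ) (h0 : Face σ₀ ∅) : Face σ ∅ := by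
  induction h with
  | base => exact h0
  | step hR hs hW ih => exact ih.reflect hW

theorem finite_neg (h : Reach σ₀ m v σ) : {s | v s < 0}.Finite := by
  induction h with
  | base => simp
  | @step m v σ s hR hs hW ih =>
    refine (ih.insert s).subset fun r hr => ?_
    by_cases hrs : r = s
    · exact .inl hrs
    · right
      by_cases hc : s.Comm r
      · rwa [mem_ofPred_eq, act_single_of_comm hc] at hr
      · have := hR.pos.2 s r (Ne.symm hrs) hc
        rw [mem_ofPred_eq, act_single_of_not_comm hrs hc] at hr
        omega

/-- The length is determined by the label and the chamber. -/
theorem length_unique {m' : ℕ} (h : Reach σ₀ m v σ) (h' : Reach σ₀ m' v σ) : m = m' := by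
  induction h generalizing m' with
  | base =>
    have gen : ∀ {m' w σ'}, Reach σ₀ m' w σ' → (∀ s, 0 < w s) → 0 = m' := by
      intro m' w σ' h' hw
      cases h' with
      | base => rfl
      | @step m v σ s hR hs hW =>
        have := hw s
        rw [act_mem (by simp)] at this
        omega
    exact gen h' fun _ => Int.one_pos
  | @step m v σ s hR hs hW ih =>
    obtain ⟨-, m'', rfl, hR2⟩ := h'.desc (r := s) (by rw [act_mem (by simp)]; omega)
    rw [act_self, symmDiff_symmDiff_cancel_right] at hR2
    exact congrArg (· + 1) (ih hR2)

/-- Crossing pairwise commuting walls of a reached chamber leads to a reached chamber, and if all the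
crossings are ascending the length grows by their number. -/
theorem flip (h : Reach σ₀ m v σ) (N : Finset (Hyp n)) (hN : PC N) (hW : ∀ s ∈ N, Wall σ s) :
    ∃ m', Reach σ₀ m' (act N v) (symmDiff σ N) ∧ ((∀ s ∈ N, 0 < v s) → m' = m + N.card) := by
  classical
  induction N using Finset.induction_on with
  | empty => exact ⟨m, by simpa [← Set.bot_eq_empty] using h, by simp⟩
  | insert s N hs ih =>
    obtain ⟨m', hR, hm⟩ := ih (hN.mono (Finset.subset_insert _ _)) fun t ht => hW t (by simp [ht])
    have hc : ∀ t ∈ N, t.Comm s := fun t ht => hN t (by simp [ht]) s (by simp)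
      (by rintro rfl; exact hs ht)
    have hv : act N v s = v s := act_of_comm hc
    have hWs : Wall (symmDiff σ (N : Set (Hyp n))) s := by
      obtain ⟨p, hp0, hp⟩ := hW s (by simp)
      refine ⟨p, hp0, fun t ht hct => ?_⟩
      have : t ∉ N := fun h => hct (hc t h).symm
      simpa [Set.mem_symmDiff, this] using hp t ht hct
    have e1 : act (insert s N) v = act {s} (act N v) := by
      rw [act_act (by simpa using hs) (by simpa using hN)]; rfl
    have e2 : symmDiff σ ((insert s N : Finset (Hyp n)) : Set (Hyp n)) =
        symmDiff (symmDiff σ (N : Set (Hyp n))) {s} := by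
      ext t
      by_cases ht : t = s
      · subst ht; simp [Set.mem_symmDiff, hs]
      · simp [Set.mem_symmDiff, ht]
    rw [e1, e2]
    rcases lt_or_gt_of_ne (h.pos.1 s) with hneg | hpos
    · obtain ⟨-, m'', -, h''⟩ := hR.desc (r := s) (by rwa [hv])
      exact ⟨m'', h'', fun hall => absurd (hall s (by simp)) (by omega)⟩
    · refine ⟨m' + 1, hR.step (by rwa [hv]) hWs, fun hall => ?_⟩
      rw [hm fun t ht => hall t (by simp [ht]), Finset.card_insert_of_notMem hs]; rfl

end Reach

/-- Flips in commuting hyperplanes compose by symmetric difference. -/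
theorem act_symmDiff [DecidableEq (Hyp n)] {A B M : Finset (Hyp n)} (hM : PC M) (hA : A ⊆ M)
    (hB : B ⊆ M) (v : Hyp n → ℤ) : act A (act B v) = act (symmDiff A B) v := by
  have e1 : A = (A \ B) ∪ (A ∩ B) := by ext; simp; tauto
  have e2 : B = (A ∩ B) ∪ (B \ A) := by ext; simp; tauto
  have e3 : symmDiff A B = (A \ B) ∪ (B \ A) := rfl
  have sub : ∀ {P Q : Finset (Hyp n)}, P ⊆ A ∪ B → Q ⊆ A ∪ B → PC (P ∪ Q) := fun hP hQ =>
    hM.mono (Finset.union_subset (hP.trans (Finset.union_subset hA hB))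
      (hQ.trans (Finset.union_subset hA hB)))
  have s1 : A \ B ⊆ A ∪ B := by intro; simp; tauto
  have s2 : B \ A ⊆ A ∪ B := by intro; simp; tauto
  have s3 : A ∩ B ⊆ A ∪ B := by intro; simp; tauto
  have h1 : act A (act B v) = act (A \ B) (act (A ∩ B) (act (A ∩ B) (act (B \ A) v))) := by
    rw [act_act (N := A \ B) _ (sub s1 s3), act_act (N := A ∩ B) _ (sub s3 s2), ← e1, ← e2]
    · rw [Finset.disjoint_left]; intro; simp; tauto
    · rw [Finset.disjoint_left]; intro; simp; tauto
  rw [h1, act_self, act_act _ (sub s1 s2), e3]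
  rw [Finset.disjoint_left]; intro; simp; tauto

/-! ### The covering -/

/-- The real configurations without triple coincidence modulo `1`: points of `ℝⁿ` at which only
commuting hyperplanes meet. -/
def XSet (n : ℕ) : Set (Fin n → ℝ) :=
  {x | ∀ s t : Hyp n, s ≠ t → s.f x = 0 → t.f x = 0 → s.Comm t}

theorem finite_walls (x : Fin n → ℝ) : {s : Hyp n | s.f x = 0}.Finite := by
  refine Set.Finite.of_injOn (f := fun s : Hyp n => (s.i, s.j)) (t := univ)
    (fun _ _ => mem_univ _) ?_ finite_univ
  intro s hs t ht h
  simp only [Prod.mk.injEq] at h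
  simp only [mem_ofPred_eq, Hyp.f] at hs ht
  rw [← h.1, ← h.2] at ht
  have : (s.m : ℝ) = t.m := by linarith
  exact Hyp.ext h.1 h.2 (by exact_mod_cast this)

/-- The finite set of hyperplanes through `x`. -/
def walls (x : Fin n → ℝ) : Finset (Hyp n) := (finite_walls x).toFinset

@[simp] theorem mem_walls {x : Fin n → ℝ} {s : Hyp n} : s ∈ walls x ↔ s.f x = 0 := by
  simp [walls]

theorem pc_walls {x : Fin n → ℝ} (hx : x ∈ XSet n) : PC (walls x) := fun s hs t ht hst =>
  hx s t hst (mem_walls.1 hs) (mem_walls.1 ht)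

open Classical in
/-- The hyperplanes through `x` having `z` on their positive side. -/
def posWalls (x z : Fin n → ℝ) : Finset (Hyp n) := (walls x).filter fun s => 0 < s.f z

@[simp] theorem mem_posWalls {x z : Fin n → ℝ} {s : Hyp n} :
    s ∈ posWalls x z ↔ s.f x = 0 ∧ 0 < s.f z := by
  simp [posWalls]

@[simp] theorem posWalls_self (x : Fin n → ℝ) : posWalls x x = ∅ := by
  ext s; simp only [mem_posWalls, Finset.notMem_empty, iff_false]; rintro ⟨h, h'⟩; linarith

/-- The open star of `x`: the points strictly on the same side as `x` of every hyperplane not passing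
through `x`. -/
def openStar (x : Fin n → ℝ) : Set (Fin n → ℝ) :=
  {z | ∀ s : Hyp n, s.f x ≠ 0 → 0 < s.f z * s.f x}

theorem mem_openStar_self (x : Fin n → ℝ) : x ∈ openStar x := fun _ hs => mul_self_pos.2 hs

theorem openStar_pos {x z : Fin n → ℝ} (hz : z ∈ openStar x) {s : Hyp n} (hs : s.f x ≠ 0) :
    s.f z ≠ 0 ∧ (0 < s.f z ↔ 0 < s.f x) := by
  have h := hz s hs
  refine ⟨left_ne_zero_of_mul h.ne', fun h' => ?_, fun h' => ?_⟩
  · exact (pos_iff_pos_of_mul_pos h).1 h'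
  · exact (pos_iff_pos_of_mul_pos h).2 h'

theorem isOpen_openStar (x : Fin n → ℝ) : IsOpen (openStar x) := by
  have key : ∀ a : ℝ, IsOpen {b : ℝ | ∀ m : ℤ, a - m ≠ 0 → 0 < (b - m) * (a - m)} := by
    intro a
    have : {b : ℝ | ∀ m : ℤ, a - m ≠ 0 → 0 < (b - m) * (a - m)} =
        Ioo ((⌈a⌉ : ℝ) - 1) ((⌊a⌋ : ℝ) + 1) := by
      ext b
      constructor
      · intro h
        have h1 : ((⌈a⌉ : ℝ) - 1) < a := by linarith [Int.ceil_lt_add_one a]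
        have h2 : a < (⌊a⌋ : ℝ) + 1 := Int.lt_floor_add_one a
        have h3 := h (⌈a⌉ - 1) (by push_cast; linarith)
        have h4 := h (⌊a⌋ + 1) (by push_cast; linarith)
        push_cast at h3 h4
        constructor
        · by_contra hb; nlinarith
        · by_contra hb; nlinarith
      · rintro ⟨h1, h2⟩ m hm
        rcases lt_or_gt_of_ne hm with h | h
        · have : ⌊a⌋ < m := Int.floor_lt.2 (by linarith)
          have : (⌊a⌋ : ℝ) + 1 ≤ m := by exact_mod_cast this
          exact mul_pos_of_neg_of_neg (by linarith) h
        · have : m < ⌈a⌉ := Int.lt_ceil.2 (by linarith)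
          have : (m : ℝ) + 1 ≤ ⌈a⌉ := by exact_mod_cast this
          exact mul_pos (by linarith) h
    rw [this]; exact isOpen_Ioo
  have : openStar x = ⋂ (i : Fin n) (j : Fin n) (_ : i < j), (fun z : Fin n → ℝ => z j - z i) ⁻¹'
      {b : ℝ | ∀ m : ℤ, (x j - x i) - m ≠ 0 → 0 < (b - m) * ((x j - x i) - m)} := by
    ext z
    simp only [openStar, Hyp.f, mem_ofPred_eq, mem_iInter, mem_preimage]
    exact ⟨fun h i j hij m => h ⟨i, j, hij, m⟩, fun h s => h s.i s.j s.lt s.m⟩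
  rw [this]
  refine isOpen_iInter_of_finite fun i => isOpen_iInter_of_finite fun j =>
    isOpen_iInter_of_finite fun _ => (key _).preimage (by fun_prop)

/-- The change of sheet labels between the stars of `x` and `y` is constant on the intersection of the
stars: the hyperplanes through both `x` and `y` cancel. -/
theorem coord_eq {x y z : Fin n → ℝ} (hx : x ∈ XSet n) (hy : y ∈ XSet n) (hzx : z ∈ openStar x)
    (hzy : z ∈ openStar y) (v : Hyp n → ℤ) :
    act (posWalls y z) (act (posWalls x z) v) = act (posWalls y x) (act (posWalls x y) v) := by
  classical
  let S : Finset (Hyp n) := (walls x ∩ walls y).filter fun s => 0 < s.f z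
  have gen : ∀ {x y : Fin n → ℝ}, z ∈ openStar x → z ∈ openStar y → ∀ s, s ∈ posWalls x z ↔
      s ∈ posWalls x y ∨ (s.f x = 0 ∧ s.f y = 0 ∧ 0 < s.f z) := by
    intro x y hzx hzy s
    simp only [mem_posWalls]
    by_cases h : s.f y = 0
    · simp [h]
    · have := (openStar_pos hzy h).2
      rw [this]; tauto
  have e1 : posWalls x z = S ∪ posWalls x y := by
    ext s; rw [gen hzx hzy]; simp [S, and_assoc, or_comm]
  have e2 : posWalls y z = posWalls y x ∪ S := by
    ext s; rw [gen hzy hzx]; simp [S]; tauto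
  have d : ∀ {x y : Fin n → ℝ} s, s ∈ posWalls x y → s.f y ≠ 0 := fun s hs =>
    (mem_posWalls.1 hs).2.ne'
  have p1 : PC (S ∪ posWalls x y) := (pc_walls hx).mono (by intro s; simp [S]; tauto)
  have p2 : PC (posWalls y x ∪ S) := (pc_walls hy).mono (by intro s; simp [S]; tauto)
  have d1 : Disjoint S (posWalls x y) := Finset.disjoint_right.2 fun s hs h => by
    simp [S] at h; exact d s hs h.1.2
  have d2 : Disjoint (posWalls y x) S := Finset.disjoint_left.2 fun s hs h => by
    simp [S] at h; exact d s hs h.1.1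
  rw [e1, e2, ← act_act d1 p1, ← act_act d2 p2, act_self]

/-- Sheet labels, with the discrete topology. -/
def Lab (n : ℕ) : Type := Hyp n → ℤ

instance : TopologicalSpace (Lab n) := ⊥
instance : DiscreteTopology (Lab n) := ⟨rfl⟩

/-- `act` as a map on the discrete space of labels. -/
def labAct (N : Finset (Hyp n)) (v : Lab n) : Lab n := act N v

theorem labAct_self (N : Finset (Hyp n)) (v : Lab n) : labAct N (labAct N v) = v := act_self N v

theorem lab_coord_eq {x y z : Fin n → ℝ} (hx : x ∈ XSet n) (hy : y ∈ XSet n)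
    (hzx : z ∈ openStar x) (hzy : z ∈ openStar y) (v : Lab n) :
    labAct (posWalls y z) (labAct (posWalls x z) v) =
      labAct (posWalls y x) (labAct (posWalls x y) v) := coord_eq hx hy hzx hzy v

/-- The covering of `XSet n` with fibre `Lab n`, trivial over every open star. The intrinsic fibre over
`z` has the trivialization centred at `z`; the trivialization centred at `x` differs from it by the
hyperplanes through `x` having `z` on their positive side. Crossing a hyperplane transversally thus
changes the label by the corresponding generator. -/
def bundle (n : ℕ) : FiberBundleCore (XSet n) (XSet n) (Lab n) where
  baseSet x := Subtype.val ⁻¹' openStar (x : Fin n → ℝ)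
  isOpen_baseSet x := (isOpen_openStar (x : Fin n → ℝ)).preimage continuous_subtype_val
  indexAt x := x
  mem_baseSet_at x := mem_openStar_self _
  coordChange x y z v := labAct (posWalls y.1 z.1) (labAct (posWalls x.1 z.1) v)
  coordChange_self x z _ v := labAct_self _ v
  continuousOn_coordChange x y := by
    have hc : Continuous fun p : XSet n × Lab n =>
        labAct (posWalls y.1 x.1) (labAct (posWalls x.1 y.1) p.2) :=
      (continuous_of_discreteTopology (f := fun v : Lab n =>
        labAct (posWalls y.1 x.1) (labAct (posWalls x.1 y.1) v))).comp continuous_snd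
    refine hc.continuousOn.congr ?_
    rintro ⟨z, v⟩ h
    exact lab_coord_eq x.2 y.2 h.1.1 h.1.2 v
  coordChange_comp x y w z _ v := by
    rw [labAct_self (posWalls y.1 z.1)]

/-- The total space of the covering. -/
abbrev Cover (n : ℕ) : Type := (bundle n).TotalSpace

namespace Cover

/-- The point of `ℝⁿ` below a point of the cover. -/
def pt (e : Cover n) : Fin n → ℝ := (e.1 : Fin n → ℝ)

/-- The label of a point of the cover, in the trivialization centred at its base point. -/
def lab (e : Cover n) : Hyp n → ℤ := e.2

theorem pt_mem (e : Cover n) : e.pt ∈ XSet n := e.1.2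

theorem isCoveringMap : IsCoveringMap (bundle n).proj :=
  FiberBundle.isCoveringMap (F := Lab n) (E := (bundle n).Fiber)

theorem continuous_pt : Continuous (pt : Cover n → _) :=
  continuous_subtype_val.comp (bundle n).continuous_proj

theorem localTriv_snd (x : XSet n) (e : Cover n) :
    ((bundle n).localTriv x e).2 = labAct (posWalls x e.pt) e.lab := by
  rw [(bundle n).localTriv_apply]
  show act (posWalls x e.pt) (act (posWalls e.pt e.pt) e.lab) = act _ _
  rw [posWalls_self, act_empty]

/-- The sheet through `e` over the open star of its base point. -/
def sheet (e : Cover n) : Set (Cover n) :=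
  {e' | e'.pt ∈ openStar e.pt ∧ act (posWalls e.pt e'.pt) e'.lab = e.lab}

theorem sheet_mem_nhds (e : Cover n) : e.sheet ∈ 𝓝 e := by
  have hs : e ∈ ((bundle n).localTriv e.1).source := by
    rw [(bundle n).mem_localTriv_source]; exact mem_openStar_self _
  have hc := ((bundle n).localTriv e.1).continuousAt hs
  have h2 : ((bundle n).localTriv e.1 e).2 = (e.lab : Lab n) := by
    rw [localTriv_snd]; show act (posWalls e.pt e.pt) _ = _; rw [posWalls_self, act_empty]
  have hU : (univ : Set (XSet n)) ×ˢ ({e.lab} : Set (Lab n)) ∈ 𝓝 ((bundle n).localTriv e.1 e) :=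
    (isOpen_univ.prod (isOpen_discrete _)).mem_nhds ⟨mem_univ _, h2⟩
  filter_upwards [hc hU, ((bundle n).localTriv e.1).open_source.mem_nhds hs] with e' h h'
  refine ⟨((bundle n).mem_localTriv_source e.1 e').1 h', ?_⟩
  exact (localTriv_snd e.1 e').symm.trans h.2

theorem ext {e e' : Cover n} (h : e.pt = e'.pt) (h' : e.lab = e'.lab) : e = e' := by
  obtain ⟨x, v⟩ := e
  obtain ⟨x', v'⟩ := e'
  obtain rfl : x = x' := Subtype.ext h
  obtain rfl : v = v' := h'
  rfl

/-- A section is continuous on `S` if near each point of `S` it is constant in the trivialization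
centred there. -/
theorem continuousOn_section {S : Set (XSet n)} {l : XSet n → Lab n}
    (h : ∀ x ∈ S, ∀ z ∈ S, (z : Fin n → ℝ) ∈ openStar x →
      act (posWalls x z) (l z) = l x) :
    ContinuousOn (fun x => (⟨x, l x⟩ : Cover n)) S := by
  intro x hx
  rw [FiberBundle.continuousWithinAt_totalSpace (F := Lab n)]
  refine ⟨continuousWithinAt_id, ?_⟩
  refine ContinuousWithinAt.congr_of_eventuallyEq (f := fun _ => (l x : Lab n))
    continuousWithinAt_const ?_ ?_
  · have hst : Subtype.val ⁻¹' openStar (x : Fin n → ℝ) ∈ 𝓝[S] x :=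
      mem_nhdsWithin_of_mem_nhds
        (((isOpen_openStar (x : Fin n → ℝ)).preimage continuous_subtype_val).mem_nhds
          (mem_openStar_self _))
    filter_upwards [hst, self_mem_nhdsWithin] with z hz hzS
    exact (localTriv_snd x (⟨z, l z⟩ : Cover n)).trans (h x hx z hzS hz)
  · exact (localTriv_snd x (⟨x, l x⟩ : Cover n)).trans (h x hx x hx (mem_openStar_self _))

end Cover

/-! ### Pieces of the covering -/

/-- The points of `XSet n` in the closed chamber with sign vector `σ`. -/
def Chamber (σ : Set (Hyp n)) : Set (Fin n → ℝ) :=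
  {x | x ∈ XSet n ∧ ∀ s : Hyp n, s.f x ≠ 0 → (s ∈ σ ↔ 0 < s.f x)}

open Classical in
/-- The hyperplanes through `x` that have the chamber `σ` on their positive side. -/
def sideWalls (σ : Set (Hyp n)) (x : Fin n → ℝ) : Finset (Hyp n) := (walls x).filter (· ∈ σ)

@[simp] theorem mem_sideWalls {σ : Set (Hyp n)} {x : Fin n → ℝ} {s : Hyp n} :
    s ∈ sideWalls σ x ↔ s.f x = 0 ∧ s ∈ σ := by simp [sideWalls]

theorem Chamber.wall {σ : Set (Hyp n)} {x : Fin n → ℝ} (hx : x ∈ Chamber σ) {s : Hyp n}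
    (hs : s.f x = 0) : Wall σ s := by
  refine ⟨x, hs, fun t hts hc => ?_⟩
  have : t.f x ≠ 0 := fun h => hc (hx.1 s t hts.symm hs h)
  exact ⟨this, hx.2 t this⟩

/-- The label `act (sideWalls σ z) v` is constant in the trivialization centred at `x`, for `z` in the
chamber `σ` near `x`. -/
theorem act_sideWalls {σ : Set (Hyp n)} {x z : Fin n → ℝ} (hx : x ∈ XSet n)
    (hz : z ∈ Chamber σ) (hzx : z ∈ openStar x) (v : Hyp n → ℤ) :
    act (posWalls x z) (act (sideWalls σ z) v) = act (sideWalls σ x) v := by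
  classical
  have key : ∀ s : Hyp n, s.f z = 0 → s.f x = 0 := fun s h => by
    by_contra h'; exact (openStar_pos hzx h').1 h
  rw [act_symmDiff (pc_walls hx) (fun s => by simp; tauto)
    (fun s => by simp; intro h _; exact key s h)]
  congr 1
  ext s
  have k := key s
  have h2 := hz.2 s
  by_cases hs : s.f z = 0
  · simp [Finset.mem_symmDiff, hs, k hs]
  · simp [Finset.mem_symmDiff, hs, h2 hs]

/-- The copy in the cover of the closed chamber `σ` whose points off the hyperplanes have label `v`. At
a point on some of the hyperplanes, the label in the trivialization centred there differs from `v`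
by those which have the chamber on their positive side. -/
def Piece (v : Hyp n → ℤ) (σ : Set (Hyp n)) : Set (Cover n) :=
  {e | e.pt ∈ Chamber σ ∧ e.lab = act (sideWalls σ e.pt) v}

/-- The section over the chamber `σ` with image `Piece v σ`. -/
def sect (v : Hyp n → ℤ) (σ : Set (Hyp n)) (x : XSet n) : Cover n :=
  ⟨x, (act (sideWalls σ x.1) v : Hyp n → ℤ)⟩

theorem sect_pt (v : Hyp n → ℤ) (σ : Set (Hyp n)) (x : XSet n) : (sect v σ x).pt = x := rfl

theorem sect_mem {v : Hyp n → ℤ} {σ : Set (Hyp n)} {x : XSet n} (hx : x.1 ∈ Chamber σ) :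
    sect v σ x ∈ Piece v σ := ⟨hx, rfl⟩

theorem sect_eq {v : Hyp n → ℤ} {σ : Set (Hyp n)} {e : Cover n} (he : e ∈ Piece v σ) :
    sect v σ ⟨e.pt, e.pt_mem⟩ = e := Cover.ext rfl he.2.symm

theorem continuousOn_sect (v : Hyp n → ℤ) (σ : Set (Hyp n)) :
    ContinuousOn (sect v σ) {x | x.1 ∈ Chamber σ} :=
  Cover.continuousOn_section (l := fun x => (act (sideWalls σ x.1) v : Hyp n → ℤ))
    fun x _ _ hz hzx => act_sideWalls x.2 hz hzx v

namespace Cover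

/-- Pieces meeting a sheet contain its centre. -/
theorem mem_of_sheet {v : Hyp n → ℤ} {σ : Set (Hyp n)} {e e' : Cover n} (h : e' ∈ e.sheet)
    (he' : e' ∈ Piece v σ) : e ∈ Piece v σ := by
  refine ⟨⟨e.pt_mem, fun s hs => ?_⟩, ?_⟩
  · have := openStar_pos h.1 hs
    rw [he'.1.2 s this.1, this.2]
  · rw [← h.2, he'.2, act_sideWalls e.pt_mem he'.1 h.1]

/-- Through a point of a piece pass all pieces obtained by flipping walls through the point. -/
theorem mem_flip {v : Hyp n → ℤ} {σ : Set (Hyp n)} {e : Cover n} (h : e ∈ Piece v σ)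
    (N : Finset (Hyp n)) (hN : ∀ s ∈ N, s.f e.pt = 0) : e ∈ Piece (act N v) (symmDiff σ N) := by
  classical
  refine ⟨⟨e.pt_mem, fun s hs => ?_⟩, ?_⟩
  · have : s ∉ N := fun h => hs (hN s h)
    simpa [Set.mem_symmDiff, this] using h.1.2 s hs
  · rw [h.2, act_symmDiff (pc_walls e.pt_mem) (fun s => by simp; tauto)
      (fun s hs => by simpa using hN s hs)]
    congr 1
    ext s
    have := hN s
    simp only [Finset.mem_symmDiff, mem_sideWalls, Set.mem_symmDiff, Finset.mem_coe]
    tauto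

/-- Two pieces through the same point differ by flipping walls through the point. -/
theorem exists_flip {v v' : Hyp n → ℤ} {σ σ' : Set (Hyp n)} {e : Cover n} (h : e ∈ Piece v σ)
    (h' : e ∈ Piece v' σ') : ∃ N ⊆ walls e.pt, v' = act N v ∧ σ' = symmDiff σ N := by
  classical
  refine ⟨(walls e.pt).filter fun s => ¬(s ∈ σ ↔ s ∈ σ'), Finset.filter_subset _ _, ?_, ?_⟩
  · have h1 : v' = act (sideWalls σ' e.pt) (act (sideWalls σ e.pt) v) := by
      rw [← h.2, h'.2, act_self]
    rw [h1, act_symmDiff (pc_walls e.pt_mem) (fun s => by simp; tauto) (fun s => by simp; tauto)]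
    congr 1
    ext s
    simp [Finset.mem_symmDiff]; tauto
  · ext s
    simp only [Set.mem_symmDiff, Finset.coe_filter, mem_walls, mem_ofPred_eq]
    by_cases hs : s.f e.pt = 0
    · simp only [hs, true_and]; tauto
    · simp only [hs, false_and, not_false_eq_true, and_true, or_false]
      rw [h.1.2 s hs, h'.1.2 s hs]

/-- Every point of the sheet of `e` lies in a flip of any piece through `e`. -/
theorem exists_flip_of_sheet {v : Hyp n → ℤ} {σ : Set (Hyp n)} {e e' : Cover n} (h : e' ∈ e.sheet)
    (he : e ∈ Piece v σ) :
    ∃ N ⊆ walls e.pt, e' ∈ Piece (act N v) (symmDiff σ N) := by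
  classical
  have key : ∀ s : Hyp n, s.f e'.pt = 0 → s.f e.pt = 0 := fun s hs => by
    by_contra h'; exact (openStar_pos h.1 h').1 hs
  let N := (walls e.pt).filter fun s => s.f e'.pt ≠ 0 ∧ ¬(s ∈ σ ↔ 0 < s.f e'.pt)
  have hN : N ⊆ walls e.pt := Finset.filter_subset _ _
  refine ⟨N, hN, ⟨e'.pt_mem, fun s hs => ?_⟩, ?_⟩
  · simp only [Set.mem_symmDiff, N, Finset.coe_filter, mem_walls, mem_ofPred_eq]
    by_cases h0 : s.f e.pt = 0
    · simp only [h0, hs, true_and, ne_eq, not_false_eq_true]; tauto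
    · simp only [h0, false_and, not_false_eq_true, and_true, or_false]
      rw [he.1.2 s h0, (openStar_pos h.1 h0).2]
  · have h1 : e'.lab = act (posWalls e.pt e'.pt) (act (sideWalls σ e.pt) v) := by
      rw [← he.2, ← h.2, act_self]
    have hPC := pc_walls e.pt_mem
    rw [h1, act_symmDiff hPC (fun s => by simp; tauto) (fun s => by simp; tauto),
      act_symmDiff hPC (fun s => by simp; intro h _; exact key s h) hN]
    congr 1
    ext s
    have := key s
    simp only [Finset.mem_symmDiff, mem_posWalls, mem_sideWalls, Set.mem_symmDiff, Finset.mem_coe,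
      N, Finset.mem_filter, mem_walls]
    by_cases hs : s.f e'.pt = 0
    · simp [hs, this hs]
    · simp only [hs]; tauto

end Cover

theorem isClosed_piece (v : Hyp n → ℤ) (σ : Set (Hyp n)) : IsClosed (Piece v σ) := by
  rw [← isOpen_compl_iff, isOpen_iff_mem_nhds]
  exact fun e he => Filter.mem_of_superset e.sheet_mem_nhds fun e' h h2 =>
    he (Cover.mem_of_sheet h h2)

/-- Nonempty faces of pieces are absolute extensors. In `ℝⁿ` the closed face `K` is convex, hence an
extension `g` exists by Tietze's theorem and the nearest-point retraction `r`. The result may leave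
`XSet n`, so off `C` it is pushed towards a point `p` of the relative interior, where only the
pairwise commuting hyperplanes of `T` vanish. -/
theorem isAE_face {σ : Set (Hyp n)} {T : Finset (Hyp n)} (hF : Face σ T) (hT : PC T)
    (v : Hyp n → ℤ) : IsAE {e ∈ Piece v σ | ∀ s ∈ T, s.f e.pt = 0} := by
  obtain ⟨p, hp0, hp⟩ := hF
  let K : Set (Fin n → ℝ) := {x | (∀ s ∈ T, s.f x = 0) ∧
    ∀ s : Hyp n, (s ∈ σ → 0 ≤ s.f x) ∧ (s ∉ σ → s.f x ≤ 0)}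
  have hKc : IsClosed K := by
    have : K = (⋂ s ∈ T, {x | s.f x = 0}) ∩
        ⋂ s : Hyp n, (⋂ _ : s ∈ σ, {x | 0 ≤ s.f x}) ∩ ⋂ _ : s ∉ σ, {x | s.f x ≤ 0} := by
      ext x; simp [K]
    rw [this]
    refine IsClosed.inter (isClosed_biInter fun s _ => isClosed_eq s.continuous_f continuous_const)
      (isClosed_iInter fun s => IsClosed.inter
        (isClosed_iInter fun _ => isClosed_le continuous_const s.continuous_f)
        (isClosed_iInter fun _ => isClosed_le s.continuous_f continuous_const))
  have hKconv : Convex ℝ K := by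
    rintro x ⟨hx1, hx2⟩ y ⟨hy1, hy2⟩ a b ha hb hab
    refine ⟨fun s hs => ?_, fun s => ⟨fun hs => ?_, fun hs => ?_⟩⟩
    · rw [Hyp.f_combo _ _ _ _ _ hab, hx1 s hs, hy1 s hs]; simp
    · rw [Hyp.f_combo _ _ _ _ _ hab]
      have := mul_nonneg ha ((hx2 s).1 hs)
      have := mul_nonneg hb ((hy2 s).1 hs)
      linarith
    · rw [Hyp.f_combo _ _ _ _ _ hab]
      have := mul_nonneg ha (neg_nonneg.2 ((hx2 s).2 hs))
      have := mul_nonneg hb (neg_nonneg.2 ((hy2 s).2 hs))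
      linarith
  have hpK : p ∈ K := by
    refine ⟨hp0, fun s => ?_⟩
    by_cases hs : s ∈ T
    · simp [hp0 s hs]
    · have := hp s (by simpa using hs)
      refine ⟨fun h => (this.2.1 h).le, fun h => ?_⟩
      by_contra hlt
      exact h (this.2.2 (not_le.1 hlt))
  -- Moving towards `p` leaves all hyperplanes outside `T`.
  have push : ∀ x ∈ K, ∀ a : ℝ, 0 ≤ a → a ≤ 1 → (a = 0 → x ∈ XSet n) →
      (1 - a) • x + a • p ∈ Chamber σ ∧ ∀ s ∈ T, s.f ((1 - a) • x + a • p) = 0 := by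
    intro x hx a ha0 ha1 hX
    have hmem := hKconv hx hpK (sub_nonneg.2 ha1) ha0 (by ring)
    refine ⟨⟨?_, fun s hs => ⟨fun h => ?_, fun h => ?_⟩⟩, hmem.1⟩
    · rcases ha0.eq_or_lt with rfl | ha
      · simpa using hX rfl
      · have key : ∀ s : Hyp n, s.f ((1 - a) • x + a • p) = 0 → s ∈ T := by
          intro s hs
          by_contra hsT
          rw [Hyp.f_combo _ _ _ _ _ (by ring)] at hs
          have h1 := hp s (by simpa using hsT)
          have h2 : 0 ≤ 1 - a := sub_nonneg.2 ha1
          by_cases hσ : s ∈ σ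
          · have := mul_nonneg h2 ((hx.2 s).1 hσ)
            have := mul_pos ha (h1.2.1 hσ)
            linarith
          · have := mul_nonneg h2 (neg_nonneg.2 ((hx.2 s).2 hσ))
            have := mul_pos ha (neg_pos.2 (lt_of_le_of_ne ((hpK.2 s).2 hσ) h1.1))
            linarith
        exact fun s t hst hs ht => hT s (key s hs) t (key t ht) hst
    · exact lt_of_le_of_ne ((hmem.2 s).1 h) (Ne.symm hs)
    · by_contra hσ
      exact absurd ((hmem.2 s).2 hσ) (not_le.2 h)
  obtain ⟨r, hrc, hrK, hr⟩ := exists_convex_retraction ⟨p, hpK⟩ hKc hKconv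
  intro Y _ C f hC hf hm
  have hfK : ∀ y ∈ C, (f y).pt ∈ K := by
    intro y hy
    refine ⟨(hm hy).2, fun s => ?_⟩
    have h := (hm hy).1.1.2 s
    by_cases hs : s.f (f y).pt = 0
    · simp [hs]
    · refine ⟨fun h' => ((h hs).1 h').le, fun h' => ?_⟩
      by_contra hlt
      exact h' ((h hs).2 (not_le.1 hlt))
  obtain ⟨u, huc, hu0, hu1, huz⟩ : ∃ u : Y → ℝ, Continuous u ∧ (∀ y, 0 ≤ u y) ∧ (∀ y, u y ≤ 1) ∧
      ∀ y, u y = 0 ↔ y ∈ C := by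
    rcases C.eq_empty_or_nonempty with rfl | hne
    · exact ⟨fun _ => 1, continuous_const, by simp, by simp, by simp⟩
    · refine ⟨fun y => min 1 (Metric.infDist y C),
        continuous_const.min (Metric.continuous_infDist_pt C),
        fun y => le_min zero_le_one Metric.infDist_nonneg, fun y => min_le_left _ _, fun y => ?_⟩
      rw [hC.mem_iff_infDist_zero hne]
      show min 1 (Metric.infDist y C) = 0 ↔ _
      constructor
      · intro h
        rcases min_choice 1 (Metric.infDist y C) with h' | h' <;> rw [h'] at h
        · norm_num at h
        · exact h
      · intro h; rw [h]; simp
  obtain ⟨g, hg⟩ := ContinuousMap.exists_restrict_eq hC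
    (⟨C.domRestrict fun y => (f y).pt, (Cover.continuous_pt.comp_continuousOn hf).domRestrict⟩ :
      C(C, Fin n → ℝ))
  have hg' : ∀ y ∈ C, g y = (f y).pt := fun y hy =>
    DFunLike.congr_fun hg (⟨y, hy⟩ : C)
  let h : Y → (Fin n → ℝ) := fun y => (1 - u y) • r (g y) + u y • p
  have hhC : ∀ y ∈ C, h y = (f y).pt := fun y hy => by
    simp only [h]; rw [(huz y).2 hy, hg' y hy, hr _ (hfK y hy)]; simp
  have hh : ∀ y, h y ∈ Chamber σ ∧ ∀ s ∈ T, s.f (h y) = 0 := fun y => by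
    refine push _ (hrK _) _ (hu0 y) (hu1 y) fun h0 => ?_
    have hy := (huz y).1 h0
    rw [hg' y hy, hr _ (hfK y hy)]
    exact (f y).pt_mem
  have hhc : Continuous h := by fun_prop
  refine ⟨fun y => sect v σ ⟨h y, (hh y).1.1⟩, ?_, fun y => ⟨sect_mem (hh y).1, (hh y).2⟩, ?_⟩
  · exact (continuousOn_sect v σ).comp_continuous (hhc.subtype_mk _) fun y => (hh y).1
  · intro y hy
    show sect v σ ⟨h y, (hh y).1.1⟩ = f y
    rw [← sect_eq (hm hy).1]
    exact congrArg (sect v σ) (Subtype.ext (hhC y hy))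

/-- A nonempty union of faces of a piece in pairwise commuting walls is an absolute extensor. The
induction on the set `A` of walls is carried out inside the face cut out by a further set `T`, since
it needs the intersections of the faces as well. -/
theorem isAE_faces {σ : Set (Hyp n)} (hF : Face σ ∅) (v : Hyp n → ℤ) (A : Finset (Hyp n))
    (hA : A.Nonempty) (T : Finset (Hyp n)) (hcomm : ∀ s t, s ∈ A ∨ s ∈ T → t ∈ A ∨ t ∈ T →
      s ≠ t → s.Comm t) (hW : ∀ s, s ∈ A ∨ s ∈ T → Wall σ s) :
    IsAE {e ∈ Piece v σ | (∀ s ∈ T, s.f e.pt = 0) ∧ ∃ s ∈ A, s.f e.pt = 0} := by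
  classical
  have clf : ∀ s : Hyp n, IsClosed {e : Cover n | s.f e.pt = 0} := fun s =>
    isClosed_eq (s.continuous_f.comp Cover.continuous_pt) continuous_const
  have face : ∀ (s : Hyp n) (T : Finset (Hyp n)), (∀ a ∈ insert s T, ∀ b ∈ insert s T, a ≠ b →
      a.Comm b) → (∀ a ∈ insert s T, Wall σ a) →
      IsAE {e ∈ Piece v σ | ∀ t ∈ insert s T, t.f e.pt = 0} := fun s T h1 h2 =>
    isAE_face (hF.finset _ h1 h2) h1 v
  induction hA using Finset.Nonempty.cons_induction generalizing T with
  | singleton s =>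
    convert face s T ?_ ?_ using 1
    · ext e; simp; tauto
    · intro a ha b hb hab
      simp only [Finset.mem_insert] at ha hb
      exact hcomm a b (by simpa using ha) (by simpa using hb) hab
    · intro a ha
      simp only [Finset.mem_insert] at ha
      exact hW a (by simpa using ha)
  | cons s A hs hA ih =>
    have h1 := face s T (fun a ha b hb hab => by
        simp only [Finset.mem_insert] at ha hb
        exact hcomm a b (by simp; tauto) (by simp; tauto) hab)
      (fun a ha => by
        simp only [Finset.mem_insert] at ha
        exact hW a (by simp; tauto))
    have h2 := ih T (fun a b ha hb => hcomm a b (by simp; tauto) (by simp; tauto))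
      (fun a ha => hW a (by simp; tauto))
    have h3 := ih (insert s T) (fun a b ha hb => hcomm a b (by simp at ha ⊢; tauto)
        (by simp at hb ⊢; tauto)) (fun a ha => hW a (by simp at ha ⊢; tauto))
    have clT : ∀ T : Finset (Hyp n), IsClosed {e : Cover n | ∀ t ∈ T, t.f e.pt = 0} := fun T => by
      simp only [ofPred_forall]
      exact isClosed_biInter fun t _ => clf t
    have clA : IsClosed {e : Cover n | ∃ t ∈ A, t.f e.pt = 0} := by
      have : {e : Cover n | ∃ t ∈ A, t.f e.pt = 0} = ⋃ t ∈ A, {e : Cover n | t.f e.pt = 0} := by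
        ext; simp
      rw [this]
      exact isClosed_biUnion_finset fun t _ => clf t
    convert h1.union h2 ?_ ((isClosed_piece v σ).inter (clT _))
      ((isClosed_piece v σ).inter ((clT T).inter clA)) using 1
    · ext e; simp; tauto
    · convert h3 using 1
      ext e; simp; tauto

/-! ### Unions of reached pieces -/

/-- A chamber `σ` with a label `v` reached from `σ₀` in `m` ascending steps. -/
structure St (σ₀ : Set (Hyp n)) where
  m : ℕ
  v : Hyp n → ℤ
  σ : Set (Hyp n)
  reach : Reach σ₀ m v σ

namespace St
variable {σ₀ : Set (Hyp n)}

theorem ext' {q q' : St σ₀} (hv : q.v = q'.v) (hσ : q.σ = q'.σ) : q = q' := by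
  obtain ⟨m, v, σ, h⟩ := q
  obtain ⟨m', v', σ', h'⟩ := q'
  obtain rfl : v = v' := hv
  obtain rfl : σ = σ' := hσ
  obtain rfl := h.length_unique h'
  rfl

/-- The piece of the cover belonging to a state. -/
abbrev piece (q : St σ₀) : Set (Cover n) := Piece q.v q.σ

theorem exists_down (q : St σ₀) {s : Hyp n} (hs : q.v s < 0) :
    ∃ q' : St σ₀, q.m = q'.m + 1 ∧ q'.v = act {s} q.v ∧ q'.σ = symmDiff q.σ {s} := by
  obtain ⟨-, m', h, h'⟩ := q.reach.desc hs
  exact ⟨⟨m', _, _, h'⟩, h, rfl, rfl⟩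

/-- The state reached by flipping some walls at a point of the piece. -/
theorem exists_flip (q : St σ₀) {e : Cover n} (he : e ∈ q.piece) {N : Finset (Hyp n)}
    (hN : N ⊆ walls e.pt) : ∃ q' : St σ₀, q'.v = act N q.v ∧ q'.σ = symmDiff q.σ N ∧
      ((∀ s ∈ N, 0 < q.v s) → q'.m = q.m + N.card) := by
  obtain ⟨m', h, hm⟩ := q.reach.flip N ((pc_walls e.pt_mem).mono hN)
    fun s hs => Chamber.wall he.1 (mem_walls.1 (hN hs))
  exact ⟨⟨m', _, _, h⟩, rfl, rfl, hm⟩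

/-- A set of states closed under crossing descents. -/
def Closed (S : Set (St σ₀)) : Prop :=
  ∀ q ∈ S, ∀ s, q.v s < 0 → ∃ q' ∈ S, q'.v = act {s} q.v ∧ q'.σ = symmDiff q.σ {s}

theorem exists_finite_closed (q : St σ₀) : ∃ S : Set (St σ₀), S.Finite ∧ q ∈ S ∧ Closed S := by
  induction h : q.m generalizing q with
  | zero =>
    refine ⟨{q}, finite_singleton q, rfl, ?_⟩
    rintro _ rfl s hs
    obtain ⟨q', h', -⟩ := exists_down _ hs
    omega
  | succ m ih =>
    have key : ∀ s : {s | q.v s < 0}, ∃ S : Set (St σ₀), S.Finite ∧ Closed S ∧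
        ∃ q' ∈ S, q'.v = act {s.1} q.v ∧ q'.σ = symmDiff q.σ {s.1} := fun s => by
      obtain ⟨q', h1, h2⟩ := q.exists_down s.2
      obtain ⟨S, h3, h4, h5⟩ := ih q' (by omega)
      exact ⟨S, h3, h5, q', h4, h2⟩
    choose S hS1 hS2 hS3 using key
    have := q.reach.finite_neg.to_subtype
    refine ⟨insert q (⋃ s, S s), (finite_iUnion hS1).insert q, mem_insert _ _, ?_⟩
    rintro q1 (rfl | h1) s hs
    · obtain ⟨q', h2, h3⟩ := hS3 ⟨s, hs⟩
      exact ⟨q', .inr (mem_iUnion.2 ⟨_, h2⟩), h3⟩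
    · obtain ⟨t, ht⟩ := mem_iUnion.1 h1
      obtain ⟨q', h2, h3⟩ := hS2 t q1 ht s hs
      exact ⟨q', .inr (mem_iUnion.2 ⟨_, h2⟩), h3⟩

theorem eq_of_m_eq_zero {q q' : St σ₀} (h : q.m = 0) (h' : q'.m = 0) : q = q' := by
  have gen : ∀ {m v σ}, Reach σ₀ m v σ → m = 0 → v = (fun _ => 1) ∧ σ = σ₀ := by
    intro m v σ hR hm
    cases hR with
    | base => exact ⟨rfl, rfl⟩
    | step => omega
  have h1 := gen q.reach h
  have h2 := gen q'.reach h'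
  exact ext' (h1.1.trans h2.1.symm) (h1.2.trans h2.2.symm)

theorem exists_neg {q : St σ₀} (h : q.m ≠ 0) : ∃ s, q.v s < 0 := by
  obtain ⟨m, v, σ, hR⟩ := q
  cases hR with
  | base => exact absurd rfl h
  | @step m v σ s hR hs hW =>
    refine ⟨s, ?_⟩
    show act {s} v s < 0
    rw [act_mem (by simp)]; omega

/-- The union of the pieces of a finite nonempty set of states closed under descent is an absolute
extensor. A state `q` of maximal length is removed from the set; its piece meets the union of the
others in exactly the faces cut out by its descents, which commute pairwise. -/
theorem isAE_closed (h0 : Face σ₀ ∅) (S : Finset (St σ₀)) (hne : S.Nonempty)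
    (hS : Closed (S : Set (St σ₀))) : IsAE (⋃ q ∈ S, q.piece) := by
  classical
  induction h : S.card generalizing S with
  | zero => rw [Finset.card_eq_zero] at h; exact absurd h hne.ne_empty
  | succ c ih =>
    obtain ⟨q, hq, hmax⟩ := S.exists_max_image St.m hne
    have hF := q.reach.face h0
    rcases (S.erase q).eq_empty_or_nonempty with hE | hE
    · have hSq : S = {q} := by
        rw [← Finset.insert_erase hq, hE]; rfl
      have := isAE_face (T := ∅) (v := q.v) (σ := q.σ) (by simpa using hF) (by simp [PC])
      rw [hSq]
      simpa using this
    have hcl : Closed ((S.erase q : Finset (St σ₀)) : Set (St σ₀)) := by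
      intro q1 h1 s hs
      have h1' := Finset.mem_erase.1 (Finset.mem_coe.1 h1)
      obtain ⟨q2, h2, h3, h4⟩ := hS q1 h1'.2 s hs
      refine ⟨q2, ?_, h3, h4⟩
      rw [Finset.mem_coe, Finset.mem_erase]
      refine ⟨?_, h2⟩
      rintro rfl
      obtain ⟨q3, h5, h6, h7⟩ := q1.exists_down hs
      obtain rfl : q2 = q3 := ext' (h3.trans h6.symm) (h4.trans h7.symm)
      have := hmax q1 h1'.2
      omega
    have hm0 : q.m ≠ 0 := by
      intro hm
      obtain ⟨q1, h1⟩ := hE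
      rw [Finset.mem_erase] at h1
      have := hmax q1 h1.2
      exact h1.1 (eq_of_m_eq_zero (by omega) hm)
    obtain ⟨s₀, hs₀⟩ := exists_neg hm0
    have hint : (⋃ q' ∈ S.erase q, q'.piece) ∩ q.piece = {e ∈ q.piece |
        (∀ s ∈ (∅ : Finset (Hyp n)), s.f e.pt = 0) ∧
        ∃ s ∈ q.reach.finite_neg.toFinset, s.f e.pt = 0} := by
      ext e
      simp only [mem_inter_iff, mem_iUnion, mem_ofPred_eq, Finset.notMem_empty, false_implies,
        implies_true, true_and, Finite.mem_toFinset, exists_prop]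
      constructor
      · rintro ⟨⟨q', hq', he'⟩, he⟩
        refine ⟨he, ?_⟩
        rw [Finset.mem_erase] at hq'
        obtain ⟨N, hN, hv, hσ⟩ := Cover.exists_flip he he'
        obtain ⟨q'', h1, h2, h3⟩ := q.exists_flip he hN
        obtain rfl : q' = q'' := ext' (hv.trans h1.symm) (hσ.trans h2.symm)
        by_contra hcon
        push Not at hcon
        have hpos : ∀ s ∈ N, 0 < q.v s := by
          intro s hs
          have := q.reach.pos.1 s
          by_contra hle
          exact hcon s (by omega) (mem_walls.1 (hN hs))
        have h4 := h3 hpos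
        have h5 := hmax q' hq'.2
        have : N = ∅ := Finset.card_eq_zero.1 (by omega)
        subst this
        apply hq'.1
        refine ext' (by simpa using hv) ?_
        rw [hσ]; simp [← Set.bot_eq_empty]
      · rintro ⟨he, s, hs, hse⟩
        refine ⟨?_, he⟩
        obtain ⟨q', h1, h2, h3⟩ := hS q hq s hs
        refine ⟨q', ?_, ?_⟩
        · rw [Finset.mem_erase]
          refine ⟨?_, h1⟩
          rintro rfl
          have := congrFun h2 s
          rw [act_mem (by simp)] at this
          omega
        · have := Cover.mem_flip he {s} (by simpa using hse)
          rw [Finset.coe_singleton, ← h2, ← h3] at this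
          exact this
    have hU : ⋃ q ∈ S, q.piece = (⋃ q' ∈ S.erase q, q'.piece) ∪ q.piece := by
      conv_lhs => rw [← Finset.insert_erase hq]
      rw [Finset.set_biUnion_insert, union_comm]
    rw [hU]
    refine IsAE.union (ih _ hE hcl (by rw [Finset.card_erase_of_mem hq]; omega)) ?_ ?_
      (isClosed_biUnion_finset fun q _ => isClosed_piece _ _) (isClosed_piece _ _)
    · have := isAE_face (T := ∅) (v := q.v) (σ := q.σ) (by simpa using hF) (by simp [PC])
      simpa using this
    · rw [hint]
      refine isAE_faces hF q.v _ ⟨s₀, by simpa using hs₀⟩ ∅ ?_ ?_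
      · intro s t hs ht hst
        simp only [Finite.mem_toFinset, mem_ofPred_eq, Finset.notMem_empty, or_false] at hs ht
        exact q.reach.comm_of_neg hs ht hst
      · intro s hs
        simp only [Finite.mem_toFinset, mem_ofPred_eq, Finset.notMem_empty, or_false] at hs
        exact (q.reach.desc hs).1

theorem locallyFinite : LocallyFinite (St.piece : St σ₀ → Set (Cover n)) := by
  intro e
  refine ⟨e.sheet, e.sheet_mem_nhds, ?_⟩
  have hsub : {q : St σ₀ | (q.piece ∩ e.sheet).Nonempty} ⊆ {q | e ∈ q.piece} := by
    rintro q ⟨e', h1, h2⟩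
    exact Cover.mem_of_sheet h2 h1
  refine Set.Finite.subset ?_ hsub
  rcases Set.eq_empty_or_nonempty {q : St σ₀ | e ∈ q.piece} with h | ⟨q, hq⟩
  · rw [h]; exact finite_empty
  · have hfin := ((walls e.pt).powerset.finite_toSet).image
      fun N : Finset (Hyp n) => (act N q.v, symmDiff q.σ (N : Set (Hyp n)))
    refine Set.Finite.of_finite_image (f := fun q : St σ₀ => (q.v, q.σ)) (hfin.subset ?_) ?_
    · rintro _ ⟨q', hq', rfl⟩
      obtain ⟨N, hN, h1, h2⟩ := Cover.exists_flip hq hq'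
      exact ⟨N, by simpa using hN, by simp [h1, h2]⟩
    · intro q1 _ q2 _ h
      simp only [Prod.mk.injEq] at h
      exact ext' h.1 h.2

/-- The reached pieces form a clopen part of the cover: at each of its points they fill a
neighbourhood. -/
theorem isClopen_iUnion : IsClopen (⋃ q : St σ₀, q.piece) := by
  refine ⟨locallyFinite.isClosed_iUnion fun q => isClosed_piece _ _, ?_⟩
  rw [isOpen_iff_mem_nhds]
  intro e he
  obtain ⟨q, hq⟩ := mem_iUnion.1 he
  refine Filter.mem_of_superset e.sheet_mem_nhds fun e' h => ?_
  obtain ⟨N, hN, h1⟩ := Cover.exists_flip_of_sheet h hq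
  obtain ⟨q', h2, h3, -⟩ := q.exists_flip hq hN
  rw [← h2, ← h3] at h1
  exact mem_iUnion.2 ⟨q', h1⟩

/-- A compact connected set meeting a reached piece lies in an absolute extensor: it is covered
by the reached pieces and meets finitely many of them, and any finite set of states is contained in a
finite descent-closed one. -/
theorem exists_isAE (h0 : Face σ₀ ∅) {K : Set (Cover n)} (hK : IsCompact K)
    (hKc : IsPreconnected K) (q : St σ₀) (hq : (K ∩ q.piece).Nonempty) :
    ∃ A, K ⊆ A ∧ IsAE A := by
  have hsub : K ⊆ ⋃ q : St σ₀, q.piece := hKc.subset_isClopen isClopen_iUnion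
    (hq.mono (inter_subset_inter_right _ (subset_iUnion (St.piece : St σ₀ → _) q)))
  have hfin := locallyFinite.finite_nonempty_inter_compact (f := (St.piece : St σ₀ → _)) hK
  choose D hD1 hD2 hD3 using exists_finite_closed (σ₀ := σ₀)
  have hSf : (⋃ q ∈ {q : St σ₀ | (q.piece ∩ K).Nonempty}, D q).Finite :=
    hfin.biUnion fun q _ => hD1 q
  refine ⟨⋃ q ∈ hSf.toFinset, q.piece, fun e he => ?_, isAE_closed h0 _ ?_ ?_⟩
  · obtain ⟨q', hq'⟩ := mem_iUnion.1 (hsub he)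
    refine mem_iUnion₂.2 ⟨q', ?_, hq'⟩
    rw [Finite.mem_toFinset]
    exact mem_iUnion₂.2 ⟨q', ⟨e, hq', he⟩, hD2 q'⟩
  · refine ⟨q, ?_⟩
    rw [Finite.mem_toFinset]
    exact mem_iUnion₂.2 ⟨q, by rwa [mem_ofPred_eq, inter_comm], hD2 q⟩
  · intro q1 h1 s hs
    rw [Finite.coe_toFinset] at h1 ⊢
    obtain ⟨q2, h2, h3⟩ := mem_iUnion₂.1 h1
    obtain ⟨q4, h4, h5⟩ := hD3 q2 q1 h3 s hs
    exact ⟨q4, mem_iUnion₂.2 ⟨q2, h2, h4⟩, h5⟩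

end St

/-! ### Lifting configurations to the line -/

theorem exp_two_pi_mul_eq {a b : ℝ} :
    Circle.exp (2 * π * a) = Circle.exp (2 * π * b) ↔ ∃ m : ℤ, a - b = m := by
  rw [Circle.exp_eq_exp]
  have hpi : (2 * π) ≠ 0 := by positivity
  constructor
  · rintro ⟨m, hm⟩
    refine ⟨m, mul_left_cancel₀ hpi ?_⟩
    linear_combination hm
  · rintro ⟨m, hm⟩
    exact ⟨m, by linear_combination (2 * π) * hm⟩

/-- A real configuration lies in `XSet` as soon as its image on the circle has no triple
coincidence. -/
theorem mem_XSet_of_circle {x : Fin n → ℝ}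
    (h : ∀ i j k : Fin n, i ≠ j → i ≠ k → j ≠ k →
      ¬(Circle.exp (2 * π * x i) = Circle.exp (2 * π * x j) ∧
        Circle.exp (2 * π * x i) = Circle.exp (2 * π * x k))) : x ∈ XSet n := by
  intro s t hst hs ht
  have co : ∀ s : Hyp n, s.f x = 0 → Circle.exp (2 * π * x s.j) = Circle.exp (2 * π * x s.i) :=
    fun s hs => exp_two_pi_mul_eq.2 ⟨s.m, by simp only [Hyp.f] at hs; linarith⟩
  have cs := co s hs
  have ct := co t ht
  have ls := s.lt
  have lt := t.lt
  refine ⟨fun e => ?_, fun e => ?_, fun e => ?_, fun e => ?_⟩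
  · have hj : s.j ≠ t.j := by
      intro e'
      refine hst (Hyp.ext e e' ?_)
      simp only [Hyp.f] at hs ht
      rw [e, e'] at hs
      have : (s.m : ℝ) = t.m := by linarith
      exact_mod_cast this
    exact h s.i s.j t.j ls.ne (e ▸ lt.ne) hj ⟨cs.symm, by rw [ct, e]⟩
  · rw [← e] at lt
    exact h s.i s.j t.i ls.ne lt.ne' (lt.trans ls).ne' ⟨cs.symm, by rw [← ct, e]⟩
  · rw [← e] at lt
    exact h s.j s.i t.j ls.ne' lt.ne (ls.trans lt).ne ⟨cs, by rw [ct, e]⟩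
  · have hi : s.i ≠ t.i := by
      intro e'
      refine hst (Hyp.ext e' e ?_)
      simp only [Hyp.f] at hs ht
      rw [e, e'] at hs
      have : (s.m : ℝ) = t.m := by linarith
      exact_mod_cast this
    exact h s.j s.i t.i ls.ne' (e ▸ lt.ne') hi ⟨cs, by rw [← ct, e]⟩

/-- Two points congruent modulo `1` lie on a common hyperplane. -/
theorem exists_hyp {x : Fin n → ℝ} {i j : Fin n} (hij : i ≠ j) {m : ℤ} (h : x i - x j = m) :
    ∃ s : Hyp n, s.f x = 0 ∧ (s.i = i ∧ s.j = j ∨ s.i = j ∧ s.j = i) := by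
  rcases lt_or_gt_of_ne hij with hlt | hlt
  · exact ⟨⟨i, j, hlt, -m⟩, by simp only [Hyp.f]; push_cast; linarith, .inl ⟨rfl, rfl⟩⟩
  · exact ⟨⟨j, i, hlt, m⟩, by simp only [Hyp.f]; linarith, .inr ⟨rfl, rfl⟩⟩

/-- The circle configuration of a real configuration, rotated so that the last point is `1`. -/
def push (n : ℕ) (x : XSet (n + 1)) : QSet n :=
  ⟨fun j => Circle.exp (2 * π * (x.1 j - x.1 (Fin.last n))), by simp, by
    rintro i j k hij hik hjk ⟨h1, h2⟩
    obtain ⟨a, ha⟩ := exp_two_pi_mul_eq.1 h1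
    obtain ⟨b, hb⟩ := exp_two_pi_mul_eq.1 h2
    obtain ⟨s, hs, hs'⟩ := exists_hyp (x := x.1) hij (m := a) (by linarith)
    obtain ⟨t, ht, ht'⟩ := exists_hyp (x := x.1) hik (m := b) (by linarith)
    have hst : s ≠ t := by
      rintro rfl
      rcases hs' with ⟨h, h'⟩ | ⟨h, h'⟩ <;> rcases ht' with ⟨g, g'⟩ | ⟨g, g'⟩
      · exact hjk (h'.symm.trans g')
      · exact hik (h.symm.trans g)
      · exact hij (g.symm.trans h)
      · exact hjk (h.symm.trans g)
    obtain ⟨c1, c2, c3, c4⟩ := x.2 s t hst hs ht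
    rcases hs' with ⟨h, h'⟩ | ⟨h, h'⟩ <;> rcases ht' with ⟨g, g'⟩ | ⟨g, g'⟩
    · exact c1 (h.trans g.symm)
    · exact c2 (h.trans g'.symm)
    · exact c3 (h'.trans g.symm)
    · exact c4 (h'.trans g'.symm)⟩

theorem continuous_push (n : ℕ) : Continuous (push n) := by
  refine Continuous.subtype_mk (continuous_pi fun j => Circle.exp.continuous.comp ?_) _
  exact continuous_const.mul (((continuous_apply j).comp continuous_subtype_val).sub
    ((continuous_apply (Fin.last n)).comp continuous_subtype_val))

/-- The evenly spaced real configuration above the basepoint. -/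
def realBase (n : ℕ) : Fin (n + 1) → ℝ := fun j => (j.val + 1) / (n + 1)

theorem realBase_f (n : ℕ) (s : Hyp (n + 1)) : s.f (realBase n) ≠ 0 := by
  intro h
  simp only [Hyp.f, realBase] at h
  have hn : (0 : ℝ) < n + 1 := by positivity
  field_simp at h
  have h' : ((s.j.val : ℤ) + 1 - (s.i.val + 1)) - (n + 1) * s.m = 0 := by
    have : (((s.j.val : ℤ) + 1 - (s.i.val + 1) - (n + 1) * s.m : ℤ) : ℝ) = 0 := by
      push_cast; linarith
    exact_mod_cast this
  have h1 : (s.i.val : ℤ) < s.j.val := by exact_mod_cast s.lt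
  have h2 : (s.j.val : ℤ) < n + 1 := by exact_mod_cast s.j.isLt
  have h3 : (0 : ℤ) ≤ s.i.val := by positivity
  have h4 : 0 < s.m := by by_contra hm; nlinarith
  nlinarith

theorem realBase_mem (n : ℕ) : realBase n ∈ XSet (n + 1) :=
  fun s _ _ h => absurd h (realBase_f n s)

theorem realBase_lift (n : ℕ) (j : Fin (n + 1)) :
    2 * π * realBase n j = 2 * π * (j.val + 1) / (n + 1) := by
  rw [realBase]; ring

theorem push_eq {x : XSet (n + 1)} {z : QSet n} (h : ∀ j, Circle.exp (2 * π * x.1 j) = z.1 j) :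
    push n x = z := by
  ext1
  funext j
  show Circle.exp (2 * π * (x.1 j - x.1 (Fin.last n))) = z.1 j
  rw [mul_sub, Circle.exp_sub, h, h, z.2.1, div_one]

theorem push_realBase (n : ℕ) : push n ⟨realBase n, realBase_mem n⟩ = Qbase n :=
  push_eq fun j => by rw [realBase_lift]; rfl

/-- Spheroids in `QSet n` lift to `XSet (n + 1)`. -/
theorem exists_real_lift {k : ℕ} (hk : 2 ≤ k) (f : C(Fin k → unitInterval, QSet n))
    (hf : ∀ y ∈ Cube.boundary (Fin k), f y = Qbase n) :
    ∃ F : C(Fin k → unitInterval, XSet (n + 1)),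
      (∀ y ∈ Cube.boundary (Fin k), F y = ⟨realBase n, realBase_mem n⟩) ∧
      ∀ y, push n (F y) = f y := by
  have H : ∀ j : Fin (n + 1), ∃ F : C(Fin k → unitInterval, ℝ),
      (∀ y ∈ Cube.boundary (Fin k), F y = 2 * π * realBase n j) ∧
        ∀ y, Circle.exp (F y) = (f y).1 j := fun j =>
    exists_lift_genLoop Circle.isCoveringMap_exp hk (b := q0 n j)
      ⟨fun y => (f y).1 j,
        (continuous_apply j).comp (continuous_subtype_val.comp f.continuous)⟩ (fun y hy => by
        show (f y).1 j = _
        rw [hf y hy]; rfl) _ (by rw [realBase_lift]; rfl)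
  choose F h1 h2 using H
  have hpi : (2 * π) ≠ 0 := by positivity
  have hexp : ∀ y j, Circle.exp (2 * π * (F j y / (2 * π))) = (f y).1 j := fun y j => by
    rw [mul_div_cancel₀ _ hpi, h2]
  refine ⟨⟨fun y => ⟨fun j => F j y / (2 * π), mem_XSet_of_circle ?_⟩, ?_⟩, ?_, ?_⟩
  · intro i j l
    simp only [hexp]
    exact (f y).2.2 i j l
  · fun_prop
  · intro y hy
    ext1
    funext j
    show F j y / (2 * π) = _
    rw [h1 j y hy, mul_div_cancel_left₀ _ hpi]
  · exact fun y => push_eq (hexp y)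

/-! ### Contracting spheroids -/

/-- The chamber of `realBase n`. -/
def baseSide (n : ℕ) : Set (Hyp (n + 1)) := {s | 0 < s.f (realBase n)}

theorem face_baseSide (n : ℕ) : Face (baseSide n) ∅ :=
  ⟨realBase n, by simp, fun s _ => ⟨realBase_f n s, Iff.rfl⟩⟩

/-- The point of the cover over `realBase n` in the starting piece. -/
def coverBase (n : ℕ) : Cover (n + 1) :=
  ⟨⟨realBase n, realBase_mem n⟩, (fun _ => 1 : Hyp (n + 1) → ℤ)⟩

theorem coverBase_mem (n : ℕ) : coverBase n ∈ Piece (fun _ => 1) (baseSide n) := by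
  refine ⟨⟨realBase_mem n, fun s _ => Iff.rfl⟩, ?_⟩
  have : sideWalls (baseSide n) (coverBase n).pt = ∅ := by
    ext s
    simp only [mem_sideWalls, Finset.notMem_empty, iff_false]
    exact fun h => realBase_f n s h.1
  rw [this, act_empty]
  rfl

theorem isClosed_boundary (k : ℕ) : IsClosed (Cube.boundary (Fin k)) := by
  have : Cube.boundary (Fin k) = ⋃ i, {y | y i = 0 ∨ y i = 1} := by
    ext y; simp [Cube.boundary]
  rw [this]
  refine isClosed_iUnion_of_finite fun i => ?_
  exact (isClosed_eq (continuous_apply i) continuous_const).union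
    (isClosed_eq (continuous_apply i) continuous_const)

/-- A map from the cube into an absolute extensor, constant on the boundary, is null-homotopic
relative to the boundary. -/
theorem IsAE.exists_homotopy {E : Type*} [TopologicalSpace E] {A : Set E} (hA : IsAE A) {k : ℕ}
    {e : E} (he : e ∈ A) (F : C(Fin k → unitInterval, E))
    (hF : ∀ y ∈ Cube.boundary (Fin k), F y = e) (hFA : ∀ y, F y ∈ A) :
    ∃ G : unitInterval × (Fin k → unitInterval) → E, Continuous G ∧ (∀ y, G (0, y) = F y) ∧
      (∀ y, G (1, y) = e) ∧ ∀ t, ∀ y ∈ Cube.boundary (Fin k), G (t, y) = e := by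
  classical
  let C₁ : Set (unitInterval × (Fin k → unitInterval)) :=
    {p | p.1 = 0} ∪ {p | p.2 ∈ Cube.boundary (Fin k)}
  let C₂ : Set (unitInterval × (Fin k → unitInterval)) := {p | p.1 = 1}
  let f : unitInterval × (Fin k → unitInterval) → E := fun p => if p.1 = 1 then e else F p.2
  have hC₁ : IsClosed C₁ := (isClosed_eq continuous_fst continuous_const).union
    ((isClosed_boundary k).preimage continuous_snd)
  have hC₂ : IsClosed C₂ := isClosed_eq continuous_fst continuous_const
  have f₁ : EqOn f (fun p => F p.2) C₁ := by
    rintro ⟨t, y⟩ (h | h)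
    · simp only [mem_ofPred_eq] at h
      simp [f, h]
    · by_cases ht : t = 1
      · simp [f, ht, hF y h]
      · simp [f, ht]
  have f₂ : EqOn f (fun _ => e) C₂ := fun p hp => if_pos hp
  obtain ⟨G, hG, -, hGf⟩ := hA _ (C₁ ∪ C₂) f (hC₁.union hC₂)
    (((F.continuous.comp continuous_snd).continuousOn.congr f₁).union_of_isClosed
      (continuousOn_const.congr f₂) hC₁ hC₂)
    (fun p _ => by
      by_cases h : p.1 = 1
      · simpa [f, h] using he
      · simpa [f, h] using hFA _)
  refine ⟨G, hG, fun y => ?_, fun y => ?_, fun t y hy => ?_⟩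
  · rw [hGf (.inl (.inl rfl)), f₁ (.inl rfl)]
  · rw [hGf (.inr rfl), f₂ rfl]
  · rw [hGf (.inl (.inr hy)), f₁ (.inr hy)]; exact hF y hy

/-- Every spheroid of dimension at least two in `QSet n` is null-homotopic. -/
theorem genLoop_homotopic_const {k : ℕ} (hk : 2 ≤ k) (f : GenLoop (Fin k) (QSet n) (Qbase n)) :
    GenLoop.Homotopic f GenLoop.const := by
  obtain ⟨f₁, hf₁, hp₁⟩ := exists_real_lift hk f.1 f.2
  obtain ⟨F, hF, hpF⟩ := exists_lift_genLoop (Cover.isCoveringMap (n := n + 1)) hk f₁ hf₁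
    (coverBase n) rfl
  have h0 : (fun _ => 0 : Fin k → unitInterval) ∈ Cube.boundary (Fin k) :=
    ⟨⟨0, by omega⟩, .inl rfl⟩
  have hr : coverBase n ∈ range F := ⟨_, hF _ h0⟩
  obtain ⟨A, hKA, hA⟩ := St.exists_isAE (face_baseSide n) (isCompact_range F.continuous)
    (isPreconnected_range F.continuous) ⟨0, _, _, .base⟩ ⟨coverBase n, hr, coverBase_mem n⟩
  obtain ⟨G, hG, hG0, hG1, hGb⟩ := hA.exists_homotopy (hKA hr) F hF fun y => hKA ⟨y, rfl⟩
  have hb : push n ((bundle (n + 1)).proj (coverBase n)) = Qbase n := push_realBase n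
  refine ⟨⟨⟨⟨fun p => push n ((bundle (n + 1)).proj (G p)),
    (continuous_push n).comp ((bundle (n + 1)).continuous_proj.comp hG)⟩, fun y => ?_, fun y => ?_⟩,
    fun t y hy => ?_⟩⟩
  · show push n ((bundle (n + 1)).proj (G (0, y))) = f.1 y
    rw [hG0, hpF, hp₁]
  · show push n ((bundle (n + 1)).proj (G (1, y))) = Qbase n
    rw [hG1, hb]
  · show push n ((bundle (n + 1)).proj (G (t, y))) = f.1 y
    rw [hGb t y hy, hb]; exact (f.2 y hy).symm

end

/-- For every `n ≥ 1` (here `Qₙ = QSet (n-1)`), the space `Qₙ` is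
aspherical: for every `k ≥ 2`, the homotopy group `π_k(Qₙ, q₀)` is trivial; hence `Qₙ` is
an Eilenberg–MacLane space `K(Πₙ, 1)`. -/
theorem QSet_aspherical (n : ℕ) (k : ℕ) (hk : 2 ≤ k) :
    Subsingleton (HomotopyGroup (Fin k) (QSet n) (Qbase n)) := by
  refine ⟨fun a b => Quotient.inductionOn₂ a b fun f g => Quotient.sound ?_⟩
  exact (genLoop_homotopic_const hk f).trans (genLoop_homotopic_const hk g).symm
end
end
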